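/- arXiv:2202.04722 — 2 statements merged into one kernel-verified Lean document; each statement's English description precedes it below -/
import Mathlib

section
/- Let f: ℝ → ℂ be a continuous 2π-periodic function, let 0 ≤ α < 1/4, let N be a positive integer, and let x̃_{−N},…,x̃_N be a set of α-perturbed nodes. Let q̃_N ∈ T_N be the unique trigonometric polynomial of degree ≤ N with q̃_N(x̃_j) = f(x̃_j) for all −N ≤ j ≤ N. Then ‖f − q̃_N‖_{L^∞[−π,π)} ≤ (1 + √(2N+1)/(cos(πα) − sin(πα))) · min_{q ∈ T_N} ‖f − q‖_{L^∞[−π,π)}. -/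
open Real Finset

/-- `q` is a trigonometric polynomial of degree ≤ N. -/
def IsTrigPoly (N : ℕ) (q : ℝ → ℂ) : Prop :=
  ∃ c : ℤ → ℂ, ∀ x : ℝ,
    q x = ∑ k ∈ Finset.Icc (-(N:ℤ)) (N:ℤ), c k * Complex.exp (Complex.I * (k : ℂ) * (x : ℂ))

/-- `x` is a set of α-perturbed nodes of size 2N+1. -/
def PerturbedNodes (N : ℕ) (α : ℝ) (x : ℤ → ℝ) : Prop :=
  ∀ j ∈ Finset.Icc (-(N:ℤ)) (N:ℤ),
    |x j - (j : ℝ) * (2*π/(2*N+1))| ≤ α * (2*π/(2*N+1))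

/-- The supremum of `‖g‖` over `[−π, π)`. -/
noncomputable def supIco (g : ℝ → ℂ) : ℝ :=
  ⨆ x : Set.Ico (-π) π, ‖g x‖

/-!
Write `h = 2π / (2N + 1)`, `x j = j h + δ j h` and `t k = k h`. The matrix `exp (I k x j)` of the
evaluation at the nodes is the Hadamard product of the equispaced one, which is `√(2N + 1)` times a
unitary matrix by discrete orthogonality, with `exp (I δ j t k)`, where `|δ j| ≤ α` and `|t k| ≤ π`.

Kadec's argument expands `1 - exp (I δ t)` in a cosine series on `[-π, π]`. Each term is a product
of a function of `δ`, dominated by its value at `α` when `|δ| ≤ α ≤ 1/4`, and a unimodular function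
of `t`. Hadamard multiplication by such a product is multiplication by diagonal matrices on both
sides, so Hadamard multiplication by `1 - exp (I δ j t k)` has norm at most the sum of the
dominating values, `1 - cos (π α) + sin (π α)`. The perturbed evaluation is therefore bounded below
by `(cos (π α) - sin (π α)) √(2N + 1)` in `ℓ²`, which controls the coefficients of a trigonometric
polynomial, hence its supremum, by its values at the nodes. Applying this to the difference of the
interpolant and an arbitrary `q` of degree at most `N` gives the bound.
-/

section CosineSeries

open Complex (I)

/-- The `n`-th coefficient of the cosine series of `f` on `[0, L]`. Indexing by `ℤ` instead of `ℕ`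
makes it the Fourier coefficient of the even `2L`-periodic extension of `f`. -/
noncomputable def cosineCoeff (L : ℝ) (f : ℝ → ℂ) (n : ℤ) : ℂ :=
  (L : ℂ)⁻¹ * ∫ s in 0..L, f s * Complex.cos (n * π / L * s)

lemma hasSum_fourierCoeffOn {a b : ℝ} (hab : a < b) {f : ℝ → ℂ} (hf : ContinuousOn f (Set.Icc a b))
    (hfab : f a = f b) (hsum : Summable (fourierCoeffOn hab f)) {x : ℝ} (hx : x ∈ Set.Icc a b) :
    HasSum (fun n : ℤ => fourierCoeffOn hab f n * fourier n (x : AddCircle (b - a))) (f x) := by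
  have : Fact (0 < b - a) := ⟨sub_pos.mpr hab⟩
  have hend : a + (b - a) = b := add_sub_cancel a b
  have hcont : Continuous (AddCircle.liftIoc (b - a) a f) :=
    AddCircle.liftIoc_continuous (by rw [hend, hfab]) (by rwa [hend])
  have hval : AddCircle.liftIoc (b - a) a f x = f x := by
    rcases hx.1.eq_or_lt with rfl | hax
    · rw [hfab, ← AddCircle.coe_add_period, hend,
        AddCircle.liftIoc_coe_apply (by rw [hend]; exact ⟨hab, le_rfl⟩)]
    · exact AddCircle.liftIoc_coe_apply (by rw [hend]; exact ⟨hax, hx.2⟩)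
  rw [← hval]
  exact has_pointwise_sum_fourier_series_of_summable
    (f := (⟨_, hcont⟩ : C(AddCircle (b - a), ℂ))) hsum x

lemma integral_neg_self_eq_integral_add_comp_neg {E : Type*} [NormedAddCommGroup E]
    [NormedSpace ℝ E] {g : ℝ → E} {L : ℝ}
    (hg : IntervalIntegrable g MeasureTheory.volume (-L) L) :
    ∫ s in -L..L, g s = ∫ s in 0..L, (g s + g (-s)) := by
  have h0 : (0 : ℝ) ∈ Set.uIcc (-L) L := by
    rcases le_total 0 L with h | h
    · exact Set.mem_uIcc.mpr (.inl ⟨by linarith, h⟩)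
    · exact Set.mem_uIcc.mpr (.inr ⟨h, by linarith⟩)
  have hleft := hg.mono_set (Set.uIcc_subset_uIcc_left h0)
  have hright := hg.mono_set (Set.uIcc_subset_uIcc_right h0)
  have hreflect : IntervalIntegrable (fun s => g (-s)) MeasureTheory.volume 0 L := by
    rw [IntervalIntegrable.iff_comp_neg]
    simpa using hleft.symm
  rw [← intervalIntegral.integral_add_adjacent_intervals hleft hright,
    intervalIntegral.integral_add hright hreflect, intervalIntegral.integral_comp_neg, neg_zero,
    add_comm]

lemma fourierCoeffOn_comp_abs {L : ℝ} (hL : 0 < L) {f : ℝ → ℂ}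
    (hf : ContinuousOn f (Set.Icc 0 L)) (n : ℤ) :
    fourierCoeffOn (neg_lt_self hL) (fun s => f |s|) n = cosineCoeff L f n := by
  have hcont : ContinuousOn (fun s => f |s|) (Set.uIcc (-L) L) := by
    rw [Set.uIcc_of_le (by linarith)]
    exact hf.comp continuous_abs.continuousOn fun s hs => ⟨abs_nonneg s, abs_le.mpr hs⟩
  have hfourier : Continuous fun s : ℝ => fourier (-n) (s : AddCircle (L - -L)) :=
    (map_continuous _).comp (AddCircle.continuous_mk' _)
  have hpoint : ∀ s ∈ Set.uIcc 0 L,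
      fourier (-n) (s : AddCircle (L - -L)) • f |s| +
        fourier (-n) ((-s : ℝ) : AddCircle (L - -L)) • f |-s| =
      2 * (f s * Complex.cos (n * π / L * s)) := by
    intro s hs
    rw [Set.uIcc_of_le hL.le] at hs
    have harg : (2 * π * I * ((-n : ℤ) : ℂ) * s / ((L - -L : ℝ) : ℂ)) = -(n * π / L * s) * I := by
      push_cast
      field_simp
      ring
    have harg' : (2 * π * I * ((-n : ℤ) : ℂ) * ((-s : ℝ) : ℂ) / ((L - -L : ℝ) : ℂ)) =
        n * π / L * s * I := by
      push_cast
      field_simp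
      ring
    rw [abs_neg, abs_of_nonneg hs.1, fourier_coe_apply, fourier_coe_apply, harg, harg', Complex.cos,
      smul_eq_mul, smul_eq_mul]
    ring
  have hint : IntervalIntegrable (fun s => fourier (-n) (s : AddCircle (L - -L)) • f |s|)
      MeasureTheory.volume (-L) L := (hfourier.continuousOn.smul hcont).intervalIntegrable
  rw [fourierCoeffOn_eq_integral, integral_neg_self_eq_integral_add_comp_neg hint,
    intervalIntegral.integral_congr hpoint, intervalIntegral.integral_const_mul, cosineCoeff,
    Complex.real_smul]
  push_cast
  ring

lemma hasSum_cosineCoeff {L : ℝ} (hL : 0 < L) {f : ℝ → ℂ} (hf : ContinuousOn f (Set.Icc 0 L))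
    (hsum : Summable (cosineCoeff L f)) {s : ℝ} (hs : s ∈ Set.Icc 0 L) :
    HasSum (fun n : ℤ => cosineCoeff L f n * Complex.exp (n * π / L * s * I)) (f s) := by
  have hcoeff : fourierCoeffOn (neg_lt_self hL) (fun s => f |s|) = cosineCoeff L f :=
    funext (fourierCoeffOn_comp_abs hL hf)
  have hcont : ContinuousOn (fun s => f |s|) (Set.Icc (-L) L) :=
    hf.comp continuous_abs.continuousOn fun s hs => ⟨abs_nonneg s, abs_le.mpr hs⟩
  have hseries := hasSum_fourierCoeffOn (neg_lt_self hL) hcont (by rw [abs_neg])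
    (by rwa [hcoeff]) (x := s) ⟨by linarith [hs.1], hs.2⟩
  rw [hcoeff, abs_of_nonneg hs.1] at hseries
  convert hseries using 3 with n
  rw [fourier_coe_apply]
  congr 1
  push_cast
  field_simp
  ring

lemma integral_cexp_mul_cos {c ν : ℂ} (h : c ^ 2 + ν ^ 2 ≠ 0) (a b : ℝ) :
    ∫ s in a..b, Complex.exp (c * s) * Complex.cos (ν * s) =
      (Complex.exp (c * b) * (c * Complex.cos (ν * b) + ν * Complex.sin (ν * b)) -
        Complex.exp (c * a) * (c * Complex.cos (ν * a) + ν * Complex.sin (ν * a))) /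
          (c ^ 2 + ν ^ 2) := by
  have hderiv (z : ℂ) : HasDerivAt (fun z : ℂ =>
      Complex.exp (c * z) * (c * Complex.cos (ν * z) + ν * Complex.sin (ν * z)) / (c ^ 2 + ν ^ 2))
      (Complex.exp (c * z) * Complex.cos (ν * z)) z := by
    have hc := (hasDerivAt_id' z).const_mul c
    have hν := (hasDerivAt_id' z).const_mul ν
    refine ((hc.cexp.fun_mul ((hν.ccos.const_mul c).fun_add (hν.csin.const_mul ν))).div_const
      (c ^ 2 + ν ^ 2)).congr_deriv ?_
    field_simp
    ring
  rw [intervalIntegral.integral_eq_sub_of_hasDerivAt (fun s _ => (hderiv s).comp_ofReal)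
    (Continuous.intervalIntegrable (by fun_prop) _ _), sub_div]

lemma cosineCoeff_cexp {L : ℝ} (hL : L ≠ 0) {c : ℂ} {n : ℤ} (h : c ^ 2 + (n * π / L) ^ 2 ≠ 0) :
    cosineCoeff L (fun s => Complex.exp (c * s)) n =
      c * ((-1) ^ n * Complex.exp (c * L) - 1) / (L * (c ^ 2 + (n * π / L) ^ 2)) := by
  have harg : (n * π / L * L : ℂ) = n * π := div_mul_cancel₀ _ (Complex.ofReal_ne_zero.mpr hL)
  have hcos : Complex.cos (n * π) = (-1) ^ n := by
    simpa using congrArg Complex.ofReal (Real.cos_int_mul_pi n)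
  rw [cosineCoeff, integral_cexp_mul_cos h, harg, Complex.sin_int_mul_pi, hcos,
    Complex.ofReal_zero, mul_zero, mul_zero, Complex.exp_zero, Complex.cos_zero, Complex.sin_zero,
    ← div_div]
  field_simp
  ring

end CosineSeries

section KadecWeights

open Complex (I)

/-- Kadec's weights: up to sign and a power of `I`, the coefficients of the cosine series of
`t ↦ 1 - exp (I * δ * t)` on `[-π, π]`, for `|δ| < 1/2`. -/
noncomputable def kadecWeight (n : ℤ) (δ : ℝ) : ℝ :=
  if n = 0 then 1 - sinc (π * δ)
  else δ * (if Even n then sin (π * δ) else cos (π * δ)) / (π * ((n / 2) ^ 2 - δ ^ 2))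

/-- The factor of `I` that makes the `n`-th Kadec weight real. -/
noncomputable def kadecPhase (n : ℤ) : ℂ := if Even n then 1 else I

lemma norm_kadecPhase (n : ℤ) : ‖kadecPhase n‖ = 1 := by
  unfold kadecPhase
  split_ifs <;> simp

lemma re_add_im_kadecPhase (n : ℤ) : (kadecPhase n).re + (kadecPhase n).im = 1 := by
  unfold kadecPhase
  split_ifs <;> simp

lemma mul_sq_le_half_sq_sub_sq {n : ℤ} (hn : n ≠ 0) (δ : ℝ) :
    (1 / 4 - δ ^ 2) * (n : ℝ) ^ 2 ≤ (n / 2) ^ 2 - δ ^ 2 := by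
  have hn1 : (1 : ℝ) ≤ (n : ℝ) ^ 2 := by
    rw [one_le_sq_iff_one_le_abs]
    exact_mod_cast Int.one_le_abs hn
  nlinarith [sq_nonneg δ]

lemma quarter_sub_sq_pos {δ : ℝ} (hδ : |δ| < 1 / 2) : 0 < 1 / 4 - δ ^ 2 := by
  nlinarith [abs_lt.mp hδ]

lemma half_sq_sub_sq_pos {n : ℤ} (hn : n ≠ 0) {δ : ℝ} (hδ : |δ| < 1 / 2) :
    0 < ((n : ℝ) / 2) ^ 2 - δ ^ 2 :=
  lt_of_lt_of_le (mul_pos (quarter_sub_sq_pos hδ) (by positivity)) (mul_sq_le_half_sq_sub_sq hn δ)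

lemma neg_one_zpow_mul_cexp_sub_cexp (n : ℤ) (z : ℂ) :
    (-1) ^ n * Complex.exp (z * I) - Complex.exp (-z * I) =
      2 * I * kadecPhase n * (if Even n then Complex.sin z else Complex.cos z) := by
  rw [Complex.exp_mul_I, Complex.exp_mul_I, Complex.cos_neg, Complex.sin_neg, kadecPhase]
  rcases Int.even_or_odd n with he | ho
  · rw [he.neg_one_zpow, if_pos he, if_pos he]
    ring
  · have hne : ¬Even n := Int.not_even_iff_odd.mpr ho
    rw [ho.neg_one_zpow, if_neg hne, if_neg hne]
    linear_combination -2 * Complex.cos z * Complex.I_sq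

lemma cexp_mul_cosineCoeff_cexp {n : ℤ} {δ : ℝ} (h : ((n : ℝ) / 2) ^ 2 - δ ^ 2 ≠ 0) :
    Complex.exp (-(π * δ) * I) * cosineCoeff (2 * π) (fun s => Complex.exp (δ * I * s)) n =
      -(kadecPhase n * (δ * (if Even n then sin (π * δ) else cos (π * δ)) /
        (π * ((n / 2) ^ 2 - δ ^ 2)) : ℝ)) := by
  have hfreq : (δ * I) ^ 2 + (n * π / (2 * π : ℝ)) ^ 2 = (((n / 2) ^ 2 - δ ^ 2 : ℝ) : ℂ) := by
    push_cast
    rw [mul_pow, Complex.I_sq]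
    field_simp
    ring
  have hne : (((n / 2) ^ 2 - δ ^ 2 : ℝ) : ℂ) ≠ 0 := Complex.ofReal_ne_zero.mpr h
  have hend : Complex.exp (-(π * δ) * I) * Complex.exp (δ * I * (2 * π : ℝ)) =
      Complex.exp (π * δ * I) := by
    rw [← Complex.exp_add]
    push_cast
    ring_nf
  have hnum : Complex.exp (-(π * δ) * I) *
      (δ * I * ((-1) ^ n * Complex.exp (δ * I * (2 * π : ℝ)) - 1)) =
      -(2 * δ * kadecPhase n *
        (if Even n then Complex.sin (π * δ) else Complex.cos (π * δ))) := by
    linear_combination δ * I * (-1) ^ n * hend +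
      δ * I * neg_one_zpow_mul_cexp_sub_cexp n (π * δ) +
      2 * δ * kadecPhase n *
        (if Even n then Complex.sin (π * δ) else Complex.cos (π * δ)) * Complex.I_sq
  rw [cosineCoeff_cexp (by positivity) (by rwa [hfreq]), hfreq, ← mul_div_assoc, hnum]
  push_cast [apply_ite Complex.ofReal] at hne ⊢
  field_simp

lemma cexp_mul_cosineCoeff_cexp_eq_ite_sub {δ : ℝ} (hδ : |δ| < 1 / 2) (n : ℤ) :
    Complex.exp (-(π * δ) * I) * cosineCoeff (2 * π) (fun s => Complex.exp (δ * I * s)) n =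
      (if n = 0 then 1 else 0) - kadecPhase n * kadecWeight n δ := by
  rcases eq_or_ne n 0 with rfl | hn
  · rcases eq_or_ne δ 0 with rfl | hδ0
    · simp [cosineCoeff, kadecPhase, kadecWeight, -mul_inv_rev]
    · have hδ2 : (((0 : ℤ) : ℝ) / 2) ^ 2 - δ ^ 2 ≠ 0 := by simpa using hδ0
      rw [cexp_mul_cosineCoeff_cexp hδ2, kadecWeight, sinc_of_ne_zero (by positivity)]
      have hδc : (δ : ℂ) ≠ 0 := Complex.ofReal_ne_zero.mpr hδ0
      simp only [kadecPhase, Even.zero, if_true]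
      push_cast
      field_simp
      ring
  · rw [cexp_mul_cosineCoeff_cexp (half_sq_sub_sq_pos hn hδ).ne', kadecWeight, if_neg hn, if_neg hn,
      zero_sub]

lemma summable_kadecWeight {δ : ℝ} (hδ : |δ| < 1 / 2) : Summable fun n => kadecWeight n δ := by
  refine ((Real.summable_one_div_int_pow.mpr one_lt_two).mul_left
    (|δ| / (π * (1 / 4 - δ ^ 2)))).of_norm_bounded_eventually ?_
  filter_upwards [(Set.finite_singleton (0 : ℤ)).compl_mem_cofinite] with n (hn : n ≠ 0)
  have htrig : |if Even n then sin (π * δ) else cos (π * δ)| ≤ 1 := by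
    split_ifs
    exacts [abs_sin_le_one _, abs_cos_le_one _]
  have hpos := quarter_sub_sq_pos hδ
  rw [kadecWeight, if_neg hn, Real.norm_eq_abs, abs_div, abs_mul,
    abs_of_pos (mul_pos pi_pos (half_sq_sub_sq_pos hn hδ)), div_mul_div_comm, mul_one, mul_assoc]
  gcongr
  · exact mul_le_of_le_one_right (abs_nonneg δ) htrig
  · exact mul_sq_le_half_sq_sub_sq hn δ

lemma hasSum_kadecWeight_mul_cexp {δ : ℝ} (hδ : |δ| < 1 / 2) {t : ℝ} (ht : t ∈ Set.Icc (-π) π) :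
    HasSum (fun n : ℤ => kadecWeight n δ *
      (kadecPhase n * Complex.exp (n / 2 * (t + π) * I))) (1 - Complex.exp (δ * t * I)) := by
  have hphase : Summable fun n => kadecPhase n * (kadecWeight n δ : ℂ) :=
    .of_norm <| by simpa [norm_kadecPhase] using (summable_kadecWeight hδ).abs
  have hsum : Summable (cosineCoeff (2 * π) fun s => Complex.exp (δ * I * s)) := by
    rw [← summable_mul_left_iff (Complex.exp_ne_zero (-(π * δ) * I)),
      funext (cexp_mul_cosineCoeff_cexp_eq_ite_sub hδ)]
    exact (hasSum_ite_eq 0 1).summable.sub hphase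
  have hs : t + π ∈ Set.Icc 0 (2 * π) := ⟨by linarith [ht.1], by linarith [ht.2]⟩
  have hseries := (hasSum_cosineCoeff two_pi_pos (f := fun s => Complex.exp (δ * I * s))
    (by fun_prop) hsum hs).mul_left (Complex.exp (-(π * δ) * I))
  simp only [← mul_assoc, cexp_mul_cosineCoeff_cexp_eq_ite_sub hδ] at hseries
  have hterm (n : ℤ) : kadecWeight n δ * (kadecPhase n * Complex.exp (n / 2 * (t + π) * I)) =
      (if n = 0 then 1 else 0) - ((if n = 0 then 1 else 0) - kadecPhase n * kadecWeight n δ) *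
        Complex.exp (n * π / (2 * π : ℝ) * (t + π : ℝ) * I) := by
    have harg : (n * π / (2 * π : ℝ) * (t + π : ℝ) * I : ℂ) = n / 2 * (t + π) * I := by
      push_cast
      field_simp
    rw [harg]
    rcases eq_or_ne n 0 with rfl | hn
    · simp only [Int.cast_zero, zero_div, zero_mul, Complex.exp_zero, if_true]
      ring
    · rw [if_neg hn]
      ring
  have hvalue : Complex.exp (δ * t * I) =
      Complex.exp (-(π * δ) * I) * Complex.exp (δ * I * (t + π : ℝ)) := by
    rw [← Complex.exp_add]
    congr 1
    push_cast
    ring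
  rw [funext hterm, hvalue]
  exact (hasSum_ite_eq 0 1).sub hseries

lemma hasSum_kadecWeight {δ : ℝ} (hδ : |δ| < 1 / 2) :
    HasSum (fun n => kadecWeight n δ) (1 - cos (π * δ) + sin (π * δ)) := by
  -- At `t = -π` the modes reduce to `1` or `I`, so real plus imaginary part is the weight.
  have hseries := hasSum_kadecWeight_mul_cexp hδ (t := -π) ⟨le_rfl, by linarith [pi_pos]⟩
  have h := (Complex.hasSum_re hseries).add (Complex.hasSum_im hseries)
  convert h using 1
  · ext n
    simp [← mul_add, re_add_im_kadecPhase]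
  · have harg : (δ * (-π : ℝ) * I : ℂ) = (-(π * δ) : ℝ) * I := by
      push_cast
      ring
    rw [harg, Complex.sub_re, Complex.sub_im, Complex.exp_ofReal_mul_I_re,
      Complex.exp_ofReal_mul_I_im, cos_neg, sin_neg, Complex.one_re, Complex.one_im]
    ring


lemma antitoneOn_sinc : AntitoneOn sinc (Set.Icc 0 π) := by
  intro x hx y hy hxy
  rcases hx.1.eq_or_lt with rfl | hx0
  · simpa using sinc_le_one y
  have hy0 := hx0.trans_le hxy
  have hslope := strictConcaveOn_sin_Icc.concaveOn.antitoneOn_slope_gt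
    (Set.left_mem_Icc.mpr pi_pos.le) (a := x) (b := y) ⟨hx, hx0⟩ ⟨hy, hy0⟩ hxy
  simpa [slope_def_field, sinc_of_ne_zero hx0.ne', sinc_of_ne_zero hy0.ne'] using hslope

lemma sinc_pos {x : ℝ} (hx0 : 0 ≤ x) (hx : x < π) : 0 < sinc x := by
  rcases hx0.eq_or_lt with rfl | hx0
  · simp
  · rw [sinc_of_ne_zero hx0.ne']
    exact div_pos (sin_pos_of_pos_of_lt_pi hx0 hx) hx0

lemma mul_cos_eq_sin_two_mul_div {x : ℝ} (hx : sinc x ≠ 0) :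
    x * cos x = sin (2 * x) / (2 * sinc x) := by
  have hsin : x * sinc x = sin x := by
    rcases eq_or_ne x 0 with rfl | hx0
    · simp
    · rw [sinc_of_ne_zero hx0, mul_div_cancel₀ _ hx0]
  rw [eq_div_iff (by positivity), sin_two_mul, ← hsin]
  ring

lemma monotoneOn_mul_cos : MonotoneOn (fun x => x * cos x) (Set.Icc 0 (π / 4)) := by
  rintro x ⟨hx0, hx⟩ y ⟨hy0, hy⟩ hxy
  have hπ := pi_pos
  have hsinc : sinc y ≤ sinc x := antitoneOn_sinc ⟨hx0, by linarith⟩ ⟨hy0, by linarith⟩ hxy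
  have hsincy : 0 < sinc y := sinc_pos hy0 (by linarith)
  have hsin : sin (2 * x) ≤ sin (2 * y) :=
    sin_le_sin_of_le_of_le_pi_div_two (by linarith) (by linarith) (by linarith)
  have hsiny : 0 ≤ sin (2 * y) := sin_nonneg_of_nonneg_of_le_pi (by linarith) (by linarith)
  simp only [mul_cos_eq_sin_two_mul_div hsincy.ne',
    mul_cos_eq_sin_two_mul_div (hsincy.trans_le hsinc).ne']
  gcongr

lemma kadecWeight_zero (n : ℤ) : kadecWeight n 0 = 0 := by
  simp [kadecWeight]

lemma abs_kadecWeight_neg (n : ℤ) (δ : ℝ) : |kadecWeight n (-δ)| = |kadecWeight n δ| := by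
  simp only [kadecWeight, mul_neg, sinc_neg, sin_neg, cos_neg, neg_sq, neg_mul]
  split_ifs
  · rfl
  · rw [mul_neg, neg_neg]
  · rw [neg_div, abs_neg]

lemma monotoneOn_kadecWeight (n : ℤ) : MonotoneOn (kadecWeight n) (Set.Icc 0 (1 / 4)) := by
  rintro x ⟨hx0, hx⟩ y ⟨hy0, hy⟩ hxy
  have hπ := pi_pos
  unfold kadecWeight
  split_ifs with hn heven
  · have := antitoneOn_sinc (a := π * x) (b := π * y) ⟨by positivity, by nlinarith⟩
      ⟨by positivity, by nlinarith⟩ (by gcongr)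
    linarith
  · have hden := half_sq_sub_sq_pos hn (δ := y) (by rw [abs_of_nonneg hy0]; linarith)
    have hsin : sin (π * x) ≤ sin (π * y) :=
      sin_le_sin_of_le_of_le_pi_div_two (by nlinarith) (by nlinarith) (by gcongr)
    have hsinx : 0 ≤ sin (π * x) := sin_nonneg_of_nonneg_of_le_pi (by positivity) (by nlinarith)
    have hsiny : 0 ≤ sin (π * y) := hsinx.trans hsin
    gcongr
  · have hden := half_sq_sub_sq_pos hn (δ := y) (by rw [abs_of_nonneg hy0]; linarith)
    have hcosy : 0 ≤ cos (π * y) := cos_nonneg_of_mem_Icc ⟨by nlinarith, by nlinarith⟩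
    have hcos : π * x * cos (π * x) ≤ π * y * cos (π * y) :=
      monotoneOn_mul_cos ⟨by positivity, by nlinarith⟩ ⟨by positivity, by nlinarith⟩ (by gcongr)
    have hcos' : x * cos (π * x) ≤ y * cos (π * y) := by
      rwa [mul_assoc, mul_assoc, mul_le_mul_iff_right₀ hπ] at hcos
    gcongr

lemma abs_kadecWeight_le (n : ℤ) {δ α : ℝ} (hδ : |δ| ≤ α) (hα : α ≤ 1 / 4) :
    |kadecWeight n δ| ≤ kadecWeight n α := by
  have hmem : |δ| ∈ Set.Icc 0 (1 / 4) := ⟨abs_nonneg δ, hδ.trans hα⟩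
  have hnonneg : 0 ≤ kadecWeight n |δ| := by
    simpa only [kadecWeight_zero] using
      monotoneOn_kadecWeight n ⟨le_rfl, by norm_num⟩ hmem (abs_nonneg δ)
  have habs : |kadecWeight n δ| = |kadecWeight n (|δ|)| := by
    rcases abs_choice δ with h | h <;> rw [h]
    rw [abs_kadecWeight_neg]
  rw [habs, abs_of_nonneg hnonneg]
  exact monotoneOn_kadecWeight n hmem ⟨(abs_nonneg δ).trans hδ, hα⟩ hδ

end KadecWeights

section Matrix

open Complex (I)
open scoped Matrix Matrix.Norms.L2Operator

variable {m n 𝕜 : Type*} [Fintype m] [Fintype n] [DecidableEq n] [RCLike 𝕜]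

lemma l2_opNorm_hadamard_le_of_hasSum {ι : Type*} {W : ι → ℝ} {S : ℝ} (hW : HasSum W S)
    {u : ι → m → 𝕜} {v : ι → n → 𝕜} (hu : ∀ k i, ‖u k i‖ ≤ W k) (hv : ∀ k j, ‖v k j‖ ≤ 1)
    {Φ : Matrix m n 𝕜} (hΦ : ∀ i j, HasSum (fun k => u k i * v k j) (Φ i j)) (A : Matrix m n 𝕜) :
    ‖A ⊙ Φ‖ ≤ S * ‖A‖ := by
  classical
  rcases isEmpty_or_nonempty m with hm | hm
  · simp [Subsingleton.elim A 0]
  have hsum : HasSum (fun k => Matrix.diagonal (u k) * A * Matrix.diagonal (v k)) (A ⊙ Φ) := by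
    refine Pi.hasSum.mpr fun i => Pi.hasSum.mpr fun j => ?_
    simp only [Matrix.mul_diagonal, Matrix.diagonal_mul, Matrix.hadamard_apply]
    exact ((hΦ i j).mul_left (A i j)).congr_fun fun k => by ring
  refine hsum.norm_le_of_bounded (hW.mul_right ‖A‖) fun k => ?_
  have hWk : 0 ≤ W k := (norm_nonneg _).trans (hu k (Classical.arbitrary m))
  calc ‖Matrix.diagonal (u k) * A * Matrix.diagonal (v k)‖
      ≤ ‖u k‖ * ‖A‖ * ‖v k‖ := by
        rw [← Matrix.l2_opNorm_diagonal, ← Matrix.l2_opNorm_diagonal]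
        exact (Matrix.l2_opNorm_mul _ _).trans (by gcongr; exact Matrix.l2_opNorm_mul _ _)
    _ ≤ W k * ‖A‖ * 1 := by
        gcongr
        exacts [(pi_norm_le_iff_of_nonneg hWk).mpr (hu k),
          (pi_norm_le_iff_of_nonneg zero_le_one).mpr (hv k)]
    _ = W k * ‖A‖ := mul_one _

lemma l2_opNorm_hadamard_one_sub_cexp_le {α : ℝ} (hα0 : 0 ≤ α) (hα : α ≤ 1 / 4)
    {δ : m → ℝ} (hδ : ∀ i, |δ i| ≤ α) {t : n → ℝ} (ht : ∀ j, t j ∈ Set.Icc (-π) π)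
    (A : Matrix m n ℂ) :
    ‖A ⊙ .of fun i j => 1 - Complex.exp (δ i * t j * I)‖ ≤
      (1 - cos (π * α) + sin (π * α)) * ‖A‖ := by
  have hα2 : |α| < 1 / 2 := by
    rw [abs_of_nonneg hα0]
    linarith
  refine l2_opNorm_hadamard_le_of_hasSum (hasSum_kadecWeight hα2)
    (u := fun k i => (kadecWeight k (δ i) : ℂ))
    (v := fun k j => kadecPhase k * Complex.exp (k / 2 * (t j + π) * I))
    (fun k i => ?_) (fun k j => ?_) (fun i j => ?_) A
  · rw [Complex.norm_real]
    exact abs_kadecWeight_le k (hδ i) hα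
  · have harg : (k / 2 * (t j + π) * I : ℂ) = (k / 2 * (t j + π) : ℝ) * I := by push_cast; rfl
    rw [norm_mul, norm_kadecPhase, harg, Complex.norm_exp_ofReal_mul_I, one_mul]
  · exact hasSum_kadecWeight_mul_cexp ((hδ i).trans_lt (by linarith)) (ht j)

lemma norm_toLp_mulVec_of_conjTranspose_mul_self {A : Matrix m n 𝕜} {r : ℝ} (hr : 0 ≤ r)
    (hA : Aᴴ * A = (r : 𝕜) • 1) (c : n → 𝕜) :
    ‖WithLp.toLp 2 (A *ᵥ c)‖ = √r * ‖WithLp.toLp 2 c‖ := by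
  have hsq : (‖WithLp.toLp 2 (A *ᵥ c)‖ : 𝕜) ^ 2 = r * (‖WithLp.toLp 2 c‖ : 𝕜) ^ 2 := by
    rw [← inner_self_eq_norm_sq_to_K (𝕜 := 𝕜), ← inner_self_eq_norm_sq_to_K (𝕜 := 𝕜),
      EuclideanSpace.inner_toLp_toLp, EuclideanSpace.inner_toLp_toLp, Matrix.star_mulVec,
      dotProduct_comm, ← Matrix.dotProduct_mulVec, Matrix.mulVec_mulVec, hA, Matrix.smul_mulVec,
      Matrix.one_mulVec, dotProduct_smul, smul_eq_mul, dotProduct_comm c]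
  have hsq' : ‖WithLp.toLp 2 (A *ᵥ c)‖ ^ 2 = r * ‖WithLp.toLp 2 c‖ ^ 2 := by exact_mod_cast hsq
  rw [← sqrt_sq (norm_nonneg _), hsq', sqrt_mul hr, sqrt_sq (norm_nonneg _)]

lemma l2_opNorm_le_sqrt_of_conjTranspose_mul_self {A : Matrix m n 𝕜} {r : ℝ} (hr : 0 ≤ r)
    (hA : Aᴴ * A = (r : 𝕜) • 1) : ‖A‖ ≤ √r := by
  rw [Matrix.l2_opNorm_def]
  exact ContinuousLinearMap.opNorm_le_bound _ (sqrt_nonneg r) fun c =>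
    (norm_toLp_mulVec_of_conjTranspose_mul_self hr hA c.ofLp).le

lemma le_norm_toLp_hadamard_cexp_mulVec {A : Matrix m n ℂ} {r : ℝ} (hr : 0 ≤ r)
    (hA : Aᴴ * A = (r : ℂ) • 1) {α : ℝ} (hα0 : 0 ≤ α) (hα : α ≤ 1 / 4) {δ : m → ℝ}
    (hδ : ∀ i, |δ i| ≤ α) {t : n → ℝ} (ht : ∀ j, t j ∈ Set.Icc (-π) π) (c : n → ℂ) :
    (cos (π * α) - sin (π * α)) * (√r * ‖WithLp.toLp 2 c‖) ≤
      ‖WithLp.toLp 2 ((A ⊙ .of fun i j => Complex.exp (δ i * t j * I)) *ᵥ c)‖ := by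
  set B : Matrix m n ℂ := A ⊙ .of fun i j => Complex.exp (δ i * t j * I)
  set D : Matrix m n ℂ := A ⊙ .of fun i j => 1 - Complex.exp (δ i * t j * I)
  have hsplit : A *ᵥ c = B *ᵥ c + D *ᵥ c := by
    rw [← Matrix.add_mulVec]
    congr 1
    ext i j
    simp only [B, D, Matrix.add_apply, Matrix.hadamard_apply, Matrix.of_apply]
    ring
  have hD : ‖WithLp.toLp 2 (D *ᵥ c)‖ ≤
      (1 - cos (π * α) + sin (π * α)) * √r * ‖WithLp.toLp 2 c‖ := by
    have hcoef : 0 ≤ 1 - cos (π * α) + sin (π * α) := by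
      have := sin_nonneg_of_nonneg_of_le_pi (x := π * α) (by positivity) (by nlinarith [pi_pos])
      linarith [cos_le_one (π * α)]
    refine (Matrix.l2_opNorm_mulVec D (WithLp.toLp 2 c)).trans ?_
    gcongr
    exact (l2_opNorm_hadamard_one_sub_cexp_le hα0 hα hδ ht A).trans
      (by gcongr; exact l2_opNorm_le_sqrt_of_conjTranspose_mul_self hr hA)
  have htri : √r * ‖WithLp.toLp 2 c‖ ≤
      ‖WithLp.toLp 2 (B *ᵥ c)‖ + ‖WithLp.toLp 2 (D *ᵥ c)‖ := by
    rw [← norm_toLp_mulVec_of_conjTranspose_mul_self hr hA, hsplit, WithLp.toLp_add]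
    exact norm_add_le _ _
  linarith

end Matrix

section Nodes

open Complex (I)
open scoped Matrix

lemma card_Icc_neg (N : ℕ) : #(Icc (-(N : ℤ)) N) = 2 * N + 1 := by
  rw [Int.card_Icc]
  omega

lemma card_coe_Icc_neg (N : ℕ) : (Fintype.card (Icc (-(N : ℤ)) (N : ℤ)) : ℝ) = 2 * N + 1 := by
  rw [Fintype.card_coe, card_Icc_neg]
  push_cast
  rfl

lemma sum_zpow_Icc_eq_zero {K : Type*} [Field K] {z : K} {N : ℕ} (hz : z ^ (2 * N + 1) = 1)
    (hz1 : z ≠ 1) : ∑ j ∈ Icc (-(N : ℤ)) N, z ^ j = 0 := by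
  have hz0 : z ≠ 0 := by
    rintro rfl
    simp at hz
  have hcard : ((N : ℤ) + 1 - -(N : ℤ)).toNat = 2 * N + 1 := by omega
  rw [Int.Icc_eq_finset_map, sum_map, hcard]
  simp only [Function.Embedding.trans_apply, Nat.castEmbedding_apply, addLeftEmbedding_apply,
    zpow_add₀ hz0, zpow_natCast]
  rw [← mul_sum, geom_sum_eq hz1, hz, sub_self, zero_div, mul_zero]

/-- The equispaced nodes `j h`, `h = 2π / (2N + 1)`. -/
noncomputable def equispacedNode (N : ℕ) (j : ℤ) : ℝ := j * (2 * π / (2 * N + 1))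

lemma sum_cexp_equispacedNode_eq_zero {N : ℕ} {m : ℤ} (hm : m ≠ 0) (hmN : |m| < 2 * N + 1) :
    ∑ j ∈ Icc (-(N : ℤ)) N, Complex.exp (I * m * equispacedNode N j) = 0 := by
  have hζ := Complex.isPrimitiveRoot_exp (2 * N + 1) (by omega)
  set ζ := Complex.exp (2 * π * I / (2 * N + 1 : ℕ)) with hζdef
  have hterm (j : ℤ) : Complex.exp (I * m * equispacedNode N j) = (ζ ^ m) ^ j := by
    rw [hζdef, ← zpow_mul, ← Complex.exp_int_mul, equispacedNode]
    congr 1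
    push_cast
    ring
  simp only [hterm]
  refine sum_zpow_Icc_eq_zero ?_ fun h => hm ?_
  · rw [← zpow_natCast, zpow_comm, zpow_natCast, hζ.pow_eq_one, one_zpow]
  · exact Int.eq_zero_of_abs_lt_dvd ((hζ.zpow_eq_one_iff_dvd m).mp h) (by push_cast; exact hmN)

lemma equispacedNode_mem_Icc {N : ℕ} {j : ℤ} (hj : j ∈ Icc (-(N : ℤ)) N) :
    equispacedNode N j ∈ Set.Icc (-π) π := by
  have hj' : |(j : ℝ)| ≤ N := by
    exact_mod_cast abs_le.mpr (mem_Icc.mp hj)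
  rw [Set.mem_Icc, ← abs_le, equispacedNode, abs_mul, abs_of_pos (a := 2 * π / _) (by positivity),
    mul_div_assoc', div_le_iff₀ (by positivity)]
  nlinarith [pi_pos]

/-- The matrix of the evaluation `c ↦ (∑ k, c k * exp (I k x j))_j` of trigonometric polynomials of
degree `≤ N` at the nodes `x`. -/
noncomputable def evalMatrix (N : ℕ) (x : ℤ → ℝ) :
    Matrix (Icc (-(N : ℤ)) (N : ℤ)) (Icc (-(N : ℤ)) (N : ℤ)) ℂ :=
  .of fun j k => Complex.exp (I * (k : ℤ) * x j)

lemma evalMatrix_mulVec (N : ℕ) (x : ℤ → ℝ) (c : ℤ → ℂ) (j : Icc (-(N : ℤ)) (N : ℤ)) :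
    (evalMatrix N x *ᵥ fun k => c k) j =
      ∑ k ∈ Icc (-(N : ℤ)) N, c k * Complex.exp (I * k * x j) := by
  rw [← sum_coe_sort (Icc (-(N : ℤ)) (N : ℤ)) fun k => c k * Complex.exp (I * k * x j)]
  simp only [Matrix.mulVec, dotProduct, evalMatrix, Matrix.of_apply, mul_comm]

lemma conjTranspose_mul_evalMatrix_equispacedNode (N : ℕ) :
    (evalMatrix N (equispacedNode N))ᴴ * evalMatrix N (equispacedNode N) =
      ((2 * N + 1 : ℝ) : ℂ) • 1 := by
  ext ⟨k, hk⟩ ⟨l, hl⟩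
  have hterm (j : ℤ) : star (Complex.exp (I * k * equispacedNode N j)) *
      Complex.exp (I * l * equispacedNode N j) =
        Complex.exp (I * (l - k : ℤ) * equispacedNode N j) := by
    rw [Complex.star_def, ← Complex.exp_conj, ← Complex.exp_add]
    simp only [map_mul, Complex.conj_I, Complex.conj_ofReal, map_intCast]
    congr 1
    push_cast
    ring
  simp only [Matrix.mul_apply, Matrix.conjTranspose_apply, evalMatrix, Matrix.of_apply, hterm,
    Matrix.smul_apply, Matrix.one_apply, smul_eq_mul, Subtype.mk.injEq]
  rw [sum_coe_sort (Icc (-(N : ℤ)) (N : ℤ))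
    fun j => Complex.exp (I * (l - k : ℤ) * equispacedNode N j)]
  split_ifs with hkl
  · subst hkl
    simp only [sub_self, Int.cast_zero, mul_zero, zero_mul, Complex.exp_zero, sum_const,
      card_Icc_neg, nsmul_eq_mul, mul_one]
    push_cast
    rfl
  · rw [mul_zero]
    rw [mem_Icc] at hk hl
    exact sum_cexp_equispacedNode_eq_zero (by omega) (abs_lt.mpr (by omega))

lemma evalMatrix_eq_hadamard (N : ℕ) (x : ℤ → ℝ) :
    evalMatrix N x = evalMatrix N (equispacedNode N) ⊙ .of fun j k => Complex.exp
      (((x j - equispacedNode N j) / (2 * π / (2 * N + 1)) : ℝ) * equispacedNode N k * I) := by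
  ext j k
  simp only [evalMatrix, Matrix.hadamard_apply, Matrix.of_apply, equispacedNode]
  rw [← Complex.exp_add]
  congr 1
  push_cast
  have hN : (2 * N + 1 : ℂ) ≠ 0 := by exact_mod_cast (by omega : 2 * N + 1 ≠ 0)
  field_simp
  ring

lemma PerturbedNodes.abs_div_le {N : ℕ} {α : ℝ} {x : ℤ → ℝ} (hx : PerturbedNodes N α x) {j : ℤ}
    (hj : j ∈ Icc (-(N : ℤ)) N) :
    |(x j - equispacedNode N j) / (2 * π / (2 * N + 1))| ≤ α := by
  have hh : 0 < 2 * π / (2 * N + 1) := by positivity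
  rw [abs_div, abs_of_pos hh, div_le_iff₀ hh]
  exact hx j hj

lemma PerturbedNodes.nonneg {N : ℕ} {α : ℝ} {x : ℤ → ℝ} (hx : PerturbedNodes N α x) : 0 ≤ α :=
  (abs_nonneg _).trans (hx.abs_div_le (j := 0) (by simp))

lemma PerturbedNodes.mem_Ioo {N : ℕ} {α : ℝ} {x : ℤ → ℝ} (hx : PerturbedNodes N α x)
    (hα : α < 1 / 2) {j : ℤ} (hj : j ∈ Icc (-(N : ℤ)) N) : x j ∈ Set.Ioo (-π) π := by
  have hh : 0 < 2 * π / (2 * N + 1) := by positivity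
  have hj' : |(j : ℝ)| ≤ N := by exact_mod_cast abs_le.mpr (mem_Icc.mp hj)
  rw [Set.mem_Ioo, ← abs_lt]
  calc |x j| ≤ |(j : ℝ) * (2 * π / (2 * N + 1))| + |x j - j * (2 * π / (2 * N + 1))| := by
        simpa using abs_add_le (j * (2 * π / (2 * N + 1))) (x j - j * (2 * π / (2 * N + 1)))
    _ ≤ N * (2 * π / (2 * N + 1)) + α * (2 * π / (2 * N + 1)) := by
        rw [abs_mul, abs_of_pos hh]
        gcongr
        exact hx j hj
    _ < (N + 1 / 2) * (2 * π / (2 * N + 1)) := by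
        rw [← add_mul]
        gcongr
    _ = π := by field_simp

lemma PerturbedNodes.le_norm_toLp_evalMatrix_mulVec {N : ℕ} {α : ℝ} {x : ℤ → ℝ}
    (hx : PerturbedNodes N α x) (hα : α ≤ 1 / 4) (c : Icc (-(N : ℤ)) (N : ℤ) → ℂ) :
    (cos (π * α) - sin (π * α)) * (√(2 * N + 1) * ‖WithLp.toLp 2 c‖) ≤
      ‖WithLp.toLp 2 (evalMatrix N x *ᵥ c)‖ := by
  rw [evalMatrix_eq_hadamard N x]
  exact le_norm_toLp_hadamard_cexp_mulVec (by positivity)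
    (conjTranspose_mul_evalMatrix_equispacedNode N) hx.nonneg hα
    (δ := fun j => (x j - equispacedNode N j) / (2 * π / (2 * N + 1)))
    (t := fun k => equispacedNode N k) (fun j => hx.abs_div_le j.2)
    (fun k => equispacedNode_mem_Icc k.2) c

end Nodes

section Interpolation

open Complex (I)
open scoped Matrix

lemma sum_norm_le_sqrt_card_mul_norm_toLp {ι E : Type*} [Fintype ι] [SeminormedAddCommGroup E]
    (v : ι → E) : ∑ i, ‖v i‖ ≤ √(Fintype.card ι) * ‖WithLp.toLp 2 v‖ := by
  rw [PiLp.norm_eq_of_L2, ← sqrt_mul (Nat.cast_nonneg _)]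
  exact le_sqrt_of_sq_le sq_sum_le_card_mul_sum_sq

lemma norm_toLp_le_sqrt_card_mul {ι E : Type*} [Fintype ι] [SeminormedAddCommGroup E] {v : ι → E}
    {M : ℝ} (hM : 0 ≤ M) (hv : ∀ i, ‖v i‖ ≤ M) :
    ‖WithLp.toLp 2 v‖ ≤ √(Fintype.card ι) * M := by
  rw [PiLp.norm_eq_of_L2, ← sqrt_sq hM, ← sqrt_mul (Nat.cast_nonneg _)]
  gcongr
  have hsq (i : ι) : ‖v i‖ ^ 2 ≤ M ^ 2 := by
    gcongr
    exact hv i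
  simpa using sum_le_sum fun i (_ : i ∈ univ) => hsq i

lemma cos_sub_sin_pos {α : ℝ} (hα0 : 0 ≤ α) (hα : α < 1 / 4) :
    0 < cos (π * α) - sin (π * α) := by
  rw [sub_pos, ← sin_pi_div_two_sub]
  exact sin_lt_sin_of_lt_of_le_pi_div_two (by nlinarith [pi_pos]) (by nlinarith [pi_pos])
    (by nlinarith [pi_pos])

lemma IsTrigPoly.sub {N : ℕ} {p q : ℝ → ℂ} (hp : IsTrigPoly N p) (hq : IsTrigPoly N q) :
    IsTrigPoly N fun t => p t - q t := by
  obtain ⟨a, ha⟩ := hp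
  obtain ⟨b, hb⟩ := hq
  exact ⟨a - b, fun t => by simp only [ha, hb, Pi.sub_apply, sub_mul, sum_sub_distrib]⟩

lemma IsTrigPoly.continuous {N : ℕ} {p : ℝ → ℂ} (hp : IsTrigPoly N p) : Continuous p := by
  obtain ⟨c, hc⟩ := hp
  rw [funext hc]
  fun_prop

lemma IsTrigPoly.norm_le_of_perturbedNodes {N : ℕ} {p : ℝ → ℂ} (hp : IsTrigPoly N p) {α : ℝ}
    {x : ℤ → ℝ} (hx : PerturbedNodes N α x) (hα : α < 1 / 4) {M : ℝ}
    (hM : ∀ j ∈ Icc (-(N : ℤ)) N, ‖p (x j)‖ ≤ M) (y : ℝ) :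
    ‖p y‖ ≤ √(2 * N + 1) / (cos (π * α) - sin (π * α)) * M := by
  obtain ⟨c, hc⟩ := hp
  set v : Icc (-(N : ℤ)) (N : ℤ) → ℂ := fun k => c k
  have hpos := cos_sub_sin_pos hx.nonneg hα
  have hM0 : 0 ≤ M := (norm_nonneg _).trans (hM 0 (by simp))
  have hcoeff : ‖p y‖ ≤ √(2 * N + 1) * ‖WithLp.toLp 2 v‖ := by
    rw [← card_coe_Icc_neg, hc]
    refine le_trans ?_ (sum_norm_le_sqrt_card_mul_norm_toLp v)
    rw [sum_coe_sort (Icc (-(N : ℤ)) (N : ℤ)) fun k => ‖c k‖]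
    refine norm_sum_le_of_le _ fun k _ => ?_
    have harg : I * k * y = (k * y : ℝ) * I := by
      push_cast
      ring
    rw [norm_mul, harg, Complex.norm_exp_ofReal_mul_I, mul_one]
  have hvalues : ‖WithLp.toLp 2 (evalMatrix N x *ᵥ v)‖ ≤ √(2 * N + 1) * M := by
    rw [← card_coe_Icc_neg]
    refine norm_toLp_le_sqrt_card_mul hM0 fun j => ?_
    rw [evalMatrix_mulVec, ← hc]
    exact hM j j.2
  have hlower := (hx.le_norm_toLp_evalMatrix_mulVec hα.le v).trans hvalues
  rw [div_mul_eq_mul_div, le_div_iff₀' hpos]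
  exact (mul_le_mul_of_nonneg_left hcoeff hpos.le).trans hlower

lemma norm_le_supIco {g : ℝ → ℂ} (hg : Bornology.IsBounded (g '' Set.Ico (-π) π)) {t : ℝ}
    (ht : t ∈ Set.Ico (-π) π) : ‖g t‖ ≤ supIco g := by
  obtain ⟨C, hC⟩ := hg.exists_norm_le
  exact le_ciSup (f := fun s : Set.Ico (-π) π => ‖g s‖)
    ⟨C, Set.forall_mem_range.mpr fun s => hC _ (Set.mem_image_of_mem g s.2)⟩ ⟨t, ht⟩

lemma IsTrigPoly.isBounded_image {N : ℕ} {p : ℝ → ℂ} (hp : IsTrigPoly N p) {s : Set ℝ}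
    (hs : Bornology.IsBounded s) : Bornology.IsBounded (p '' s) :=
  ((hs.isCompact_closure.image hp.continuous).isBounded).subset (Set.image_mono subset_closure)

end Interpolation

theorem interpolation_lebesgue_bound_general (f : ℝ → ℂ)
    (hf : Bornology.IsBounded (f '' Set.Ico (-π) π)) (α : ℝ) (hα : α < 1 / 4) (N : ℕ)
    (x : ℤ → ℝ) (hx : PerturbedNodes N α x) (qt : ℝ → ℂ) (hqt : IsTrigPoly N qt)
    (hinterp : ∀ j ∈ Finset.Icc (-(N : ℤ)) (N : ℤ), qt (x j) = f (x j)) :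
    ∀ q : ℝ → ℂ, IsTrigPoly N q → ∀ y ∈ Set.Ico (-π) π,
      ‖f y - qt y‖ ≤
        (1 + Real.sqrt (2 * (N : ℝ) + 1) / (Real.cos (π * α) - Real.sin (π * α))) *
          supIco (fun t => f t - q t) := by
  intro q hq y hy
  have hbdd : Bornology.IsBounded ((fun t => f t - q t) '' Set.Ico (-π) π) :=
    by
    refine (hf.sub (hq.isBounded_image (Metric.isBounded_Ico (-π) π))).subset ?_
    rintro _ ⟨t, ht, rfl⟩
    exact Set.sub_mem_sub ⟨t, ht, rfl⟩ ⟨t, ht, rfl⟩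
  have hnode (j : ℤ) (hj : j ∈ Icc (-(N : ℤ)) N) :
      ‖qt (x j) - q (x j)‖ ≤ supIco fun t => f t - q t := by
    rw [hinterp j hj]
    exact norm_le_supIco hbdd (Set.Ioo_subset_Ico_self (hx.mem_Ioo (by linarith) hj))
  calc ‖f y - qt y‖ ≤ ‖f y - q y‖ + ‖qt y - q y‖ := by
        rw [norm_sub_rev (qt y)]
        exact norm_sub_le_norm_sub_add_norm_sub _ _ _
    _ ≤ supIco (fun t => f t - q t) + √(2 * N + 1) / (cos (π * α) - sin (π * α)) *
          supIco (fun t => f t - q t) :=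
        add_le_add (norm_le_supIco hbdd hy)
          ((hqt.sub hq).norm_le_of_perturbedNodes hx hα hnode y)
    _ = _ := by ring

/-- near-best approximation property of trigonometric interpolation at
α-perturbed nodes, α < 1/4. -/
theorem interpolation_lebesgue_bound (f : ℝ → ℂ) (hfc : Continuous f)
    (hfp : Function.Periodic f (2*π))
    (α : ℝ) (hα0 : 0 ≤ α) (hα : α < 1/4) (N : ℕ) (hN : 0 < N)
    (x : ℤ → ℝ) (hx : PerturbedNodes N α x)
    (qt : ℝ → ℂ) (hqt : IsTrigPoly N qt)
    (hinterp : ∀ j ∈ Finset.Icc (-(N:ℤ)) (N:ℤ), qt (x j) = f (x j)) :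
    ∀ q : ℝ → ℂ, IsTrigPoly N q → ∀ y ∈ Set.Ico (-π) π,
      ‖f y - qt y‖ ≤
        (1 + Real.sqrt (2*(N:ℝ)+1) / (Real.cos (π*α) - Real.sin (π*α))) *
          supIco (fun t => f t - q t) :=
  interpolation_lebesgue_bound_general f
    ((isCompact_Icc.image hfc).isBounded.subset (Set.image_mono Set.Ico_subset_Icc_self))
    α hα N x hx qt hqt hinterp
end

section
/- Fix any α with 0 < α < 1/2, and for each even positive integer N let h = 2π/(2N+1) and consider the α-perturbed nodes defined by x̃_0 = 0; x̃_j = (j−α)h for −N ≤ j ≤ −1 with j even, x̃_j = (j+α)h for −N ≤ j ≤ −1 with j odd; x̃_j = (j−α)h for 1 ≤ j ≤ N with j odd, x̃_j = (j+α)h for 1 ≤ j ≤ N with j even. Let w̃_{−N},…,w̃_N be the unique quadrature weights exact on T_N for these nodes. Then for all sufficiently large even N, the central weight satisfies w̃_0 < 0. -/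
open Real Finset

/-- The weights `w` form a quadrature rule at the nodes `x` that is exact on `T_N`. -/
def ExactQuad (N : ℕ) (x : ℤ → ℝ) (w : ℤ → ℝ) : Prop :=
  ∀ q : ℝ → ℂ, IsTrigPoly N q →
    ∑ j ∈ Finset.Icc (-(N:ℤ)) (N:ℤ), (w j : ℂ) * q (x j) = ∫ t in (-π)..π, q t

/-- The α-perturbed nodes obtained by maximally perturbing the equally spaced grid in an
alternating fashion. -/
noncomputable def altNodes (N : ℕ) (α : ℝ) : ℤ → ℝ := fun j =>
  if j = 0 then 0
  else if (Even j ∧ j < 0) ∨ (Odd j ∧ 0 < j) then ((j : ℝ) - α) * (2*π/(2*N+1))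
  else ((j : ℝ) + α) * (2*π/(2*N+1))

/-! Let `ℓ` be the trigonometric Lagrange function of the node `0`; it vanishes at all other nodes.
Since `ℓ ∈ T_N` is integrated exactly both by the given rule and by the equispaced rule,
`w 0 = h ∑ ℓ (k h)`. Here `ℓ 0 = 1`, while for `k ≠ 0` the alternation of the perturbations puts
an odd number of positive nodes to the left of `|k| h`, so that `ℓ (k h) ≤ 0`. For even `k = 2 p`
the product formula for `ℓ` is compared with the one for the unperturbed grid, which is explicit
through Chebyshev polynomials: two consecutive nodes moving towards each other increase the product
of their distances to a point outside, and only the pair of nodes next to `k h` costs a constant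
factor. This gives `ℓ (2 p h) ≤ -c / p` as long as `2 p h < π / 2`, and the divergence of the
harmonic series makes the sum negative. -/

theorem isTrigPoly_exp {N : ℕ} {k : ℤ} (hk : k ∈ Finset.Icc (-(N : ℤ)) N) (a : ℂ) :
    IsTrigPoly N fun x => a * Complex.exp (Complex.I * k * x) :=
  ⟨Pi.single k a, fun x => by
    rw [Finset.sum_eq_single_of_mem k hk fun l _ hl => by rw [Pi.single_eq_of_ne hl, zero_mul],
      Pi.single_eq_same]⟩

theorem IsTrigPoly.add {N : ℕ} {p q : ℝ → ℂ} (hp : IsTrigPoly N p) (hq : IsTrigPoly N q) :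
    IsTrigPoly N (p + q) := by
  obtain ⟨c, hc⟩ := hp
  obtain ⟨d, hd⟩ := hq
  exact ⟨c + d, fun x => by simp only [Pi.add_apply, hc, hd, add_mul, Finset.sum_add_distrib]⟩

theorem IsTrigPoly.sum {ι : Type*} {N : ℕ} {s : Finset ι} {f : ι → ℝ → ℂ}
    (hf : ∀ i ∈ s, IsTrigPoly N (f i)) : IsTrigPoly N (∑ i ∈ s, f i) :=
  Finset.sum_induction f (IsTrigPoly N) (fun _ _ => IsTrigPoly.add)
    ⟨0, fun x => by simp⟩ hf

theorem IsTrigPoly.mul {m n : ℕ} {p q : ℝ → ℂ} (hp : IsTrigPoly m p) (hq : IsTrigPoly n q) :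
    IsTrigPoly (m + n) (p * q) := by
  obtain ⟨c, hc⟩ := hp
  obtain ⟨d, hd⟩ := hq
  have expand : p * q = ∑ k ∈ Finset.Icc (-(m : ℤ)) m, ∑ l ∈ Finset.Icc (-(n : ℤ)) n,
      fun x : ℝ => c k * d l * Complex.exp (Complex.I * (k + l : ℤ) * x) := by
    funext x
    simp only [Pi.mul_apply, hc, hd, Finset.sum_mul_sum, Finset.sum_apply]
    refine Finset.sum_congr rfl fun k _ => Finset.sum_congr rfl fun l _ => ?_
    rw [mul_mul_mul_comm, ← Complex.exp_add]
    push_cast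
    ring_nf
  rw [expand]
  refine IsTrigPoly.sum fun k hk => IsTrigPoly.sum fun l hl => isTrigPoly_exp ?_ _
  rw [Finset.mem_Icc] at hk hl ⊢
  omega

theorem IsTrigPoly.prod {ι : Type*} {s : Finset ι} {n : ι → ℕ} {f : ι → ℝ → ℂ}
    (hf : ∀ i ∈ s, IsTrigPoly (n i) (f i)) : IsTrigPoly (∑ i ∈ s, n i) (∏ i ∈ s, f i) := by
  induction s using Finset.cons_induction with
  | empty => exact ⟨fun _ => 1, fun x => by simp⟩
  | cons i s hi ih =>
    rw [Finset.sum_cons, Finset.prod_cons]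
    exact (hf i (Finset.mem_cons_self i s)).mul
      (ih fun j hj => hf j (Finset.mem_cons_of_mem hj))

theorem isTrigPoly_cos_sub_div (v d : ℝ) :
    IsTrigPoly 1 fun x => (((cos x - v) / d : ℝ) : ℂ) := by
  have hexp (k : ℤ) (hk : k ∈ Finset.Icc (-1) 1) := isTrigPoly_exp (N := 1) hk
  convert ((hexp 1 (by decide) (1 / (2 * d))).add (hexp (-1) (by decide) (1 / (2 * d)))).add
    (hexp 0 (by decide) (-v / d)) using 1
  funext x
  push_cast [Pi.add_apply, Complex.cos]
  rw [mul_zero, zero_mul, Complex.exp_zero]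
  ring_nf

theorem sum_zpow_Icc_neg_eq_zero {K : Type*} [Field K] {r : K} {N : ℕ}
    (hr : r ^ (2 * N + 1) = 1) (hr1 : r ≠ 1) :
    ∑ j ∈ Finset.Icc (-(N : ℤ)) N, r ^ j = 0 := by
  have hr0 : r ≠ 0 := by
    rintro rfl
    simp at hr
  have hcard : ((N : ℤ) + 1 - -(N : ℤ)).toNat = 2 * N + 1 := by omega
  simp only [Int.Icc_eq_finset_map, hcard, Finset.sum_map, Function.Embedding.trans_apply,
    Nat.castEmbedding_apply, addLeftEmbedding_apply, zpow_add₀ hr0, zpow_natCast]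
  rw [← Finset.mul_sum, geom_sum_eq hr1, hr, sub_self, zero_div, mul_zero]

/-- The spacing of the equispaced grid with `2N + 1` points per period. -/
noncomputable def gridStep (N : ℕ) : ℝ := 2 * π / (2 * N + 1)

theorem gridStep_pos (N : ℕ) : 0 < gridStep N := by
  unfold gridStep
  positivity

theorem two_mul_add_one_mul_gridStep (N : ℕ) : (2 * N + 1) * gridStep N = 2 * π := by
  unfold gridStep
  field_simp

theorem sum_exp_grid {N : ℕ} {k : ℤ} (hk : k ∈ Finset.Icc (-(N : ℤ)) N) :
    ∑ j ∈ Finset.Icc (-(N : ℤ)) N, Complex.exp (Complex.I * k * (j * gridStep N : ℝ)) =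
      if k = 0 then (2 * N + 1 : ℂ) else 0 := by
  split_ifs with hk0
  · simp only [hk0, Int.cast_zero, mul_zero, zero_mul, Complex.exp_zero, Finset.sum_const,
      Int.card_Icc, nsmul_eq_mul, mul_one]
    norm_cast
    omega
  set ζ : ℂ := Complex.exp (2 * π * Complex.I / (2 * N + 1 : ℕ)) with hζ
  have hprim : IsPrimitiveRoot ζ (2 * N + 1) := Complex.isPrimitiveRoot_exp _ (by omega)
  have hterm (j : ℤ) : Complex.exp (Complex.I * k * (j * gridStep N : ℝ)) = (ζ ^ k) ^ j := by
    rw [← zpow_mul, hζ, ← Complex.exp_int_mul, gridStep]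
    push_cast
    ring_nf
  simp only [hterm]
  refine sum_zpow_Icc_neg_eq_zero ?_ fun h => hk0 ?_
  · rw [← zpow_natCast, zpow_comm, zpow_natCast, hprim.pow_eq_one, one_zpow]
  · rw [hprim.zpow_eq_one_iff_dvd] at h
    rw [Finset.mem_Icc] at hk
    exact Int.eq_zero_of_abs_lt_dvd h (by rw [abs_lt]; omega)

theorem integral_exp_int_mul (k : ℤ) :
    ∫ t in (-π)..π, Complex.exp (Complex.I * k * t) = if k = 0 then (2 * π : ℂ) else 0 := by
  split_ifs with hk
  · simp only [hk, Int.cast_zero, mul_zero, zero_mul, Complex.exp_zero,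
      intervalIntegral.integral_const, Complex.real_smul, mul_one]
    push_cast
    ring
  · rw [integral_exp_mul_complex (mul_ne_zero Complex.I_ne_zero (Int.cast_ne_zero.mpr hk)),
      div_eq_zero_iff, sub_eq_zero, Complex.exp_eq_exp_iff_exists_int]
    exact Or.inl ⟨k, by push_cast; ring⟩

theorem IsTrigPoly.integral_eq_sum_grid {N : ℕ} {q : ℝ → ℂ} (hq : IsTrigPoly N q) :
    ∫ t in (-π)..π, q t =
      gridStep N * ∑ j ∈ Finset.Icc (-(N : ℤ)) N, q (j * gridStep N) := by
  obtain ⟨c, hc⟩ := hq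
  simp only [hc]
  rw [intervalIntegral.integral_finsetSum fun k _ =>
      Continuous.intervalIntegrable (by fun_prop) _ _, Finset.sum_comm, Finset.mul_sum]
  refine Finset.sum_congr rfl fun k hk => ?_
  rw [intervalIntegral.integral_const_mul, integral_exp_int_mul, ← Finset.mul_sum,
    sum_exp_grid hk]
  split_ifs
  · have hstep : (2 * N + 1 : ℂ) * gridStep N = 2 * π := by
      exact_mod_cast two_mul_add_one_mul_gridStep N
    linear_combination -c k * hstep
  · simp only [mul_zero]

/-- The trigonometric Lagrange function of the node `0` among the nodes `0, ±x 1, …, ±x N`,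
whose zeros `x j` and `-x j` are collected in one factor. -/
noncomputable def centralLagrange (x : ℤ → ℝ) (N : ℕ) (t : ℝ) : ℝ :=
  ∏ j ∈ range N, (cos t - cos (x (j + 1 : ℕ))) / (1 - cos (x (j + 1 : ℕ)))

theorem isTrigPoly_centralLagrange (x : ℤ → ℝ) (N : ℕ) :
    IsTrigPoly N fun t => (centralLagrange x N t : ℂ) := by
  have := IsTrigPoly.prod (s := range N) fun j _ =>
    isTrigPoly_cos_sub_div (cos (x (j + 1 : ℕ))) (1 - cos (x (j + 1 : ℕ)))
  rw [Finset.sum_const, Finset.card_range, smul_eq_mul, mul_one] at this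
  convert this using 1
  funext t
  simp [centralLagrange, Finset.prod_apply]

theorem centralLagrange_neg (x : ℤ → ℝ) (N : ℕ) (t : ℝ) :
    centralLagrange x N (-t) = centralLagrange x N t := by
  simp only [centralLagrange, cos_neg]

theorem centralLagrange_zero {x : ℤ → ℝ} {N : ℕ}
    (hx : ∀ j ∈ range N, cos (x (j + 1 : ℕ)) < 1) : centralLagrange x N 0 = 1 :=
  Finset.prod_eq_one fun j hj => by rw [cos_zero, div_self (sub_pos.mpr (hx j hj)).ne']

theorem centralLagrange_node {x : ℤ → ℝ} (hodd : ∀ j, x (-j) = -x j) {N : ℕ} {j : ℤ}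
    (hj : j ∈ Finset.Icc (-(N : ℤ)) N) (hj0 : j ≠ 0) : centralLagrange x N (x j) = 0 := by
  rw [Finset.mem_Icc] at hj
  refine Finset.prod_eq_zero (i := j.natAbs - 1) (Finset.mem_range.mpr (by omega)) ?_
  rw [Nat.sub_add_cancel (by omega), div_eq_zero_iff]
  left
  rcases Int.natAbs_eq j with h | h <;> rw [h]
  · simp
  · simp [hodd]

theorem ExactQuad.apply_zero_eq {x : ℤ → ℝ} {w : ℤ → ℝ} {N : ℕ} (hw : ExactQuad N x w)
    (hodd : ∀ j, x (-j) = -x j) (hx : ∀ j ∈ range N, cos (x (j + 1 : ℕ)) < 1) :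
    w 0 = gridStep N *
      (1 + 2 * ∑ j ∈ range N, centralLagrange x N ((j + 1 : ℕ) * gridStep N)) := by
  have hexact := hw _ (isTrigPoly_centralLagrange x N)
  have hx0 : x 0 = 0 := by
    have := hodd 0
    rw [neg_zero] at this
    linarith
  rw [(isTrigPoly_centralLagrange x N).integral_eq_sum_grid,
    Finset.sum_eq_single_of_mem 0 (by simp) fun j hj hj0 => by
      rw [centralLagrange_node hodd hj hj0, Complex.ofReal_zero, mul_zero],
    hx0, centralLagrange_zero hx, Complex.ofReal_one, mul_one] at hexact
  have hgrid : w 0 = gridStep N * ∑ j ∈ Finset.Icc (-(N : ℤ)) N,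
      centralLagrange x N (j * gridStep N) := by
    exact_mod_cast hexact
  have heven : Function.Even fun j : ℤ => centralLagrange x N (j * gridStep N) := fun j => by
    simp only [Int.cast_neg, neg_mul, centralLagrange_neg]
  rw [hgrid, Finset.sum_Icc_of_even_eq_range heven, Finset.sum_range_succ']
  simp only [Int.cast_natCast, Nat.cast_zero, Int.cast_zero, zero_mul, centralLagrange_zero hx]
  ring

theorem prod_range_le_prod_range_of_pairs {R : Type*} [CommSemiring R] [PartialOrder R]
    [IsOrderedRing R] {f g : ℕ → R} {N : ℕ} (hf : ∀ i, 0 ≤ f i)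
    (hpair : ∀ m, 2 * m + 1 < N → f (2 * m) * f (2 * m + 1) ≤ g (2 * m) * g (2 * m + 1))
    (hlast : ∀ m, N = 2 * m + 1 → f (2 * m) ≤ g (2 * m)) :
    ∏ i ∈ range N, f i ≤ ∏ i ∈ range N, g i := by
  have hnonneg (n : ℕ) : 0 ≤ ∏ i ∈ range n, f i := Finset.prod_nonneg fun i _ => hf i
  have heven (n : ℕ) (hn : 2 * n ≤ N) :
      ∏ i ∈ range (2 * n), f i ≤ ∏ i ∈ range (2 * n), g i := by
    induction n with
    | zero => simp
    | succ n ih =>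
      simp only [Nat.mul_succ, Finset.prod_range_succ, mul_assoc]
      exact mul_le_mul (ih (by omega)) (hpair n (by omega)) (mul_nonneg (hf _) (hf _))
        ((hnonneg _).trans (ih (by omega)))
  obtain ⟨n, rfl | rfl⟩ := N.even_or_odd'
  · exact heven n le_rfl
  · rw [Finset.prod_range_succ, Finset.prod_range_succ]
    exact mul_le_mul (heven n (by omega)) (hlast n rfl) (hf _)
      ((hnonneg _).trans (heven n (by omega)))

theorem prod_nonpos_of_odd_card {ι R : Type*} [CommRing R] [PartialOrder R] [IsOrderedRing R]
    {s : Finset ι} {f : ι → R} (hs : Odd #s) (hf : ∀ i ∈ s, f i ≤ 0) : ∏ i ∈ s, f i ≤ 0 := by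
  have hneg : ∏ i ∈ s, f i = -∏ i ∈ s, -f i := by rw [Finset.prod_neg, hs.neg_one_pow]; ring
  rw [hneg]
  exact neg_nonpos.mpr (Finset.prod_nonneg fun i hi => neg_nonneg.mpr (hf i hi))

theorem cos_sub_cos_eq_two_mul_sin_mul_sin (x y : ℝ) :
    cos x - cos y = 2 * (sin ((y + x) / 2) * sin ((y - x) / 2)) := by
  rw [cos_sub_cos, ← neg_sub y x, neg_div, sin_neg, add_comm]
  ring

theorem abs_cos_sub_cos_le_of_Icc_subset {a b a' b' : ℝ} (ha : 0 ≤ a) (haa' : a ≤ a')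
    (hab' : a' ≤ b') (hbb' : b' ≤ b) (hb : b ≤ π) : |cos a' - cos b'| ≤ |cos a - cos b| := by
  have h₁ : cos b ≤ cos b' := cos_le_cos_of_nonneg_of_le_pi (by linarith) hb hbb'
  have h₂ : cos b' ≤ cos a' := cos_le_cos_of_nonneg_of_le_pi (by linarith) (by linarith) hab'
  have h₃ : cos a' ≤ cos a := cos_le_cos_of_nonneg_of_le_pi ha (by linarith) haa'
  rw [abs_of_nonneg (by linarith), abs_of_nonneg (by linarith)]
  linarith

theorem sin_mul_sin_le_of_inward {u v δ : ℝ} (hδ : 0 ≤ δ) (hδuv : δ ≤ v - u) (huv : v - u ≤ π) :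
    sin u * sin v ≤ sin (u + δ) * sin (v - δ) := by
  have hcos : cos (v - u) ≤ cos (v - δ - (u + δ)) := by
    rw [← cos_abs (v - δ - (u + δ))]
    exact cos_le_cos_of_nonneg_of_le_pi (abs_nonneg _) huv
      (abs_le.mpr ⟨by linarith, by linarith⟩)
  have hsum : cos (v - δ + (u + δ)) = cos (v + u) := by ring_nf
  rw [cos_sub, cos_sub] at hcos
  rw [cos_add (v - δ), cos_add v] at hsum
  linarith

/-- Written with half-angle sines, each side is a product of two products
`sin _ * sin _` to which `sin_mul_sin_le_of_inward` applies. -/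
theorem abs_cos_sub_mul_abs_cos_sub_le_of_inward {c u v δ : ℝ} (hδ : 0 ≤ δ) (hδuv : δ ≤ v - u)
    (hu : 0 ≤ u) (hv : v ≤ π) (hc₀ : 0 ≤ c) (hcπ : c ≤ π) (hside : c ≤ u ∨ v ≤ c) :
    |cos c - cos u| * |cos c - cos v| ≤ |cos c - cos (u + δ)| * |cos c - cos (v - δ)| := by
  have hadd₀ : 0 ≤ sin ((u + c) / 2) * sin ((v + c) / 2) :=
    mul_nonneg (sin_nonneg_of_nonneg_of_le_pi (by linarith) (by linarith))
      (sin_nonneg_of_nonneg_of_le_pi (by linarith) (by linarith))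
  have hsub₀ : 0 ≤ sin ((u - c) / 2) * sin ((v - c) / 2) := by
    rcases hside with hcu | hvc
    · exact mul_nonneg (sin_nonneg_of_nonneg_of_le_pi (by linarith) (by linarith))
        (sin_nonneg_of_nonneg_of_le_pi (by linarith) (by linarith))
    · exact mul_nonneg_of_nonpos_of_nonpos
        (sin_nonpos_of_nonpos_of_neg_pi_le (by linarith) (by linarith))
        (sin_nonpos_of_nonpos_of_neg_pi_le (by linarith) (by linarith))
  have hadd : sin ((u + c) / 2) * sin ((v + c) / 2) ≤
      sin ((u + δ + c) / 2) * sin ((v - δ + c) / 2) := by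
    convert sin_mul_sin_le_of_inward (u := (u + c) / 2) (v := (v + c) / 2) (δ := δ / 2)
      (by linarith) (by linarith) (by linarith) using 3 <;> ring
  have hsub : sin ((u - c) / 2) * sin ((v - c) / 2) ≤
      sin ((u + δ - c) / 2) * sin ((v - δ - c) / 2) := by
    convert sin_mul_sin_le_of_inward (u := (u - c) / 2) (v := (v - c) / 2) (δ := δ / 2)
      (by linarith) (by linarith) (by linarith) using 3 <;> ring
  have hmul := mul_le_mul hadd hsub hsub₀ (hadd₀.trans hadd)
  have hmul₀ := mul_nonneg hadd₀ hsub₀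
  simp only [← abs_mul, cos_sub_cos_eq_two_mul_sin_mul_sin c]
  refine abs_le_abs_of_nonneg ?_ ?_ <;> linarith

theorem sin_le_two_mul_sin {x y : ℝ} (hx : 0 ≤ x) (hxy : x ≤ 2 * y) (hy : y ≤ π / 2) :
    sin x ≤ 2 * sin y := by
  have hhalf : sin (x / 2) ≤ sin y :=
    sin_le_sin_of_le_of_le_pi_div_two (by linarith [pi_pos]) hy (by linarith)
  have hhalf₀ : 0 ≤ sin (x / 2) := sin_nonneg_of_nonneg_of_le_pi (by linarith) (by linarith)
  calc sin x = 2 * sin (x / 2) * cos (x / 2) := by rw [← sin_two_mul]; ring_nf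
    _ ≤ 2 * sin (x / 2) := mul_le_of_le_one_right (by linarith) (cos_le_one _)
    _ ≤ 2 * sin y := by linarith

theorem abs_cos_sub_cos_le_four_mul {c u v : ℝ} (hc : 0 ≤ c) (hcv : c ≤ v)
    (hvu : v - c ≤ 2 * (u - c)) (hcu : u + c ≤ π) :
    |cos c - cos v| ≤ 4 * |cos c - cos u| := by
  have hadd : sin ((v + c) / 2) ≤ 2 * sin ((u + c) / 2) :=
    sin_le_two_mul_sin (by linarith) (by linarith) (by linarith)
  have hsub : sin ((v - c) / 2) ≤ 2 * sin ((u - c) / 2) :=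
    sin_le_two_mul_sin (by linarith) (by linarith) (by linarith)
  have hadd₀ : 0 ≤ sin ((v + c) / 2) := sin_nonneg_of_nonneg_of_le_pi (by linarith) (by linarith)
  have hsub₀ : 0 ≤ sin ((v - c) / 2) := sin_nonneg_of_nonneg_of_le_pi (by linarith) (by linarith)
  have hmul := mul_le_mul hadd hsub hsub₀ (hadd₀.trans hadd)
  rw [cos_sub_cos_eq_two_mul_sin_mul_sin c, cos_sub_cos_eq_two_mul_sin_mul_sin c,
    abs_of_nonneg (by positivity)]
  linarith [le_abs_self (2 * (sin ((u + c) / 2) * sin ((u - c) / 2)))]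

theorem mul_gridStep_le_pi {N : ℕ} {t : ℝ} (ht : t ≤ N + 1 / 2) : t * gridStep N ≤ π := by
  have := mul_le_mul_of_nonneg_right ht (gridStep_pos N).le
  linarith [two_mul_add_one_mul_gridStep N]

theorem natCast_mul_gridStep_le_pi {N k : ℕ} (hk : k ≤ N) : k * gridStep N ≤ π := by
  have : (k : ℝ) ≤ N := by exact_mod_cast hk
  exact mul_gridStep_le_pi (by linarith)

open Polynomial in
/-- The grid points are the zeros of
`cos ((N + 1) t) - cos (N t) = -2 sin ((2 N + 1) t / 2) sin (t / 2)` in `[0, π]`. -/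
theorem C_mul_nodal_cos_grid (N : ℕ) :
    C (2 ^ N) * Lagrange.nodal (range (N + 1)) (fun j : ℕ => cos (j * gridStep N)) =
      Chebyshev.T ℝ (N + 1) - Chebyshev.T ℝ N := by
  have hinj : Set.InjOn (fun j : ℕ => cos (j * gridStep N)) (range (N + 1)) := by
    have hmem (j : ℕ) (hj : j ∈ range (N + 1)) : (j : ℝ) * gridStep N ∈ Set.Icc 0 π :=
      ⟨mul_nonneg j.cast_nonneg (gridStep_pos N).le,
        natCast_mul_gridStep_le_pi (Finset.mem_range_succ_iff.mp hj)⟩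
    intro i hi j hj hij
    have := injOn_cos (hmem i hi) (hmem j hj) hij
    exact_mod_cast mul_right_cancel₀ (gridStep_pos N).ne' this
  have hdegT (n : ℕ) : (Chebyshev.T ℝ n).degree = n := by simp
  have hlt : (Chebyshev.T ℝ N).degree < (Chebyshev.T ℝ (N + 1 : ℕ)).degree := by
    rw [hdegT, hdegT]
    exact_mod_cast N.lt_succ_self
  have hdeg : (C (2 ^ N) * Lagrange.nodal (range (N + 1))
      (fun j : ℕ => cos (j * gridStep N))).degree = ((N + 1 : ℕ) : WithBot ℕ) := by
    rw [degree_C_mul (by positivity), Lagrange.degree_nodal, Finset.card_range]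
  rw [← Nat.cast_succ (R := ℤ)]
  refine eq_of_degree_le_of_eval_index_eq _ hinj ?_ ?_ ?_ fun j hj => ?_
  · rw [hdeg, Finset.card_range]
  · rw [hdeg, degree_sub_eq_left_of_degree_lt hlt, hdegT]
  · rw [leadingCoeff_sub_of_degree_lt hlt, leadingCoeff_mul, leadingCoeff_C,
      (Lagrange.nodal_monic ..).leadingCoeff, mul_one, Chebyshev.leadingCoeff_T,
      Int.natAbs_natCast, Nat.add_sub_cancel]
  · rw [eval_mul, Lagrange.eval_nodal_at_node (v := fun j : ℕ => cos (j * gridStep N)) hj,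
      mul_zero, eval_sub, Chebyshev.T_real_cos, Chebyshev.T_real_cos, eq_comm, sub_eq_zero,
      cos_eq_cos_iff]
    refine ⟨j, Or.inr ?_⟩
    push_cast
    linear_combination (j : ℝ) * two_mul_add_one_mul_gridStep N

open Polynomial in
theorem prod_erase_cos_grid_sub {N k : ℕ} (hk : k ∈ range (N + 1)) :
    2 ^ N * ∏ j ∈ (range (N + 1)).erase k, (cos (k * gridStep N) - cos (j * gridStep N)) =
      (N + 1) * (Chebyshev.U ℝ N).eval (cos (k * gridStep N)) -
        N * (Chebyshev.U ℝ (N - 1)).eval (cos (k * gridStep N)) := by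
  have := congrArg (fun p => (derivative p).eval (cos (k * gridStep N))) (C_mul_nodal_cos_grid N)
  simp only [derivative_C_mul, derivative_sub, Chebyshev.T_derivative_eq_U, eval_mul, eval_C,
    eval_sub] at this
  rw [Lagrange.eval_nodal_derivative_eval_node_eq (v := fun j : ℕ => cos (j * gridStep N)) hk,
    Lagrange.eval_nodal] at this
  simpa using this

open Polynomial in
theorem prod_one_sub_cos_grid (N : ℕ) :
    2 ^ N * ∏ j ∈ range N, (1 - cos ((j + 1 : ℕ) * gridStep N)) = 2 * N + 1 := by
  have := prod_erase_cos_grid_sub (N := N) (k := 0) (by simp)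
  rw [Finset.range_add_one', Finset.erase_insert (by simp), Finset.prod_map] at this
  simp only [Nat.cast_zero, zero_mul, cos_zero, Chebyshev.U_eval_one] at this
  exact this.trans (by push_cast; ring)

theorem prod_erase_cos_grid_sub_mul_sin {N k : ℕ} (hk : k ∈ range (N + 1)) :
    (∏ j ∈ (range (N + 1)).erase k, (cos (k * gridStep N) - cos (j * gridStep N))) *
        sin (k * gridStep N) =
      (-1) ^ k * sin (k * gridStep N / 2) *
        ∏ j ∈ range N, (1 - cos ((j + 1 : ℕ) * gridStep N)) := by
  have hU := Polynomial.Chebyshev.U_real_cos (k * gridStep N) N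
  have hU' := Polynomial.Chebyshev.U_real_cos (k * gridStep N) (N - 1)
  have hstep := two_mul_add_one_mul_gridStep N
  have hsin : sin ((N + 1) * (k * gridStep N)) = (-1) ^ k * sin (k * gridStep N / 2) := by
    rw [← sin_add_nat_mul_pi]
    congr 1
    linear_combination (k / 2 : ℝ) * hstep
  have hsin' : sin (N * (k * gridStep N)) = -((-1) ^ k * sin (k * gridStep N / 2)) := by
    rw [← mul_neg, ← sin_neg, ← sin_add_nat_mul_pi]
    congr 1
    linear_combination (k / 2 : ℝ) * hstep
  push_cast at hU hU'
  rw [hsin] at hU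
  rw [sub_add_cancel, hsin'] at hU'
  refine mul_left_cancel₀ (pow_ne_zero N (two_ne_zero' ℝ)) ?_
  linear_combination sin (k * gridStep N) * prod_erase_cos_grid_sub hk + (N + 1 : ℝ) * hU -
    (N : ℝ) * hU' - (-1) ^ k * sin (k * gridStep N / 2) * prod_one_sub_cos_grid N

theorem altNodes_neg (N : ℕ) (α : ℝ) (j : ℤ) : altNodes N α (-j) = -altNodes N α j := by
  have hparity := Int.not_even_iff_odd (n := j)
  simp only [altNodes, neg_eq_zero, even_neg, odd_neg, Left.neg_neg_iff, Left.neg_pos_iff]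
  split_ifs <;> grind

theorem altNodes_of_odd (N : ℕ) (α : ℝ) {j : ℕ} (hj : Odd j) :
    altNodes N α j = (j - α) * gridStep N := by
  have hpos := hj.pos
  rw [altNodes, if_neg (by omega), if_pos (Or.inr ⟨by exact_mod_cast hj, by omega⟩), gridStep,
    Int.cast_natCast]

theorem altNodes_of_even (N : ℕ) (α : ℝ) {j : ℕ} (hj : Even j) (hj0 : j ≠ 0) :
    altNodes N α j = (j + α) * gridStep N := by
  have hodd : ¬Odd (j : ℤ) := by exact_mod_cast Nat.not_odd_iff_even.mpr hj
  rw [altNodes, if_neg (by omega), if_neg (by rintro (h | h) <;> [omega; exact hodd h.1]),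
    gridStep, Int.cast_natCast]

theorem abs_altNodes_sub_le (N : ℕ) {α : ℝ} (hα0 : 0 ≤ α) (j : ℕ) :
    |altNodes N α j - j * gridStep N| ≤ α * gridStep N := by
  have hαh : 0 ≤ α * gridStep N := mul_nonneg hα0 (gridStep_pos N).le
  rcases eq_or_ne j 0 with rfl | hj0
  · simpa [altNodes] using hαh
  rcases j.even_or_odd with hj | hj
  · rw [altNodes_of_even N α hj hj0, add_mul, add_sub_cancel_left, abs_of_nonneg hαh]
  · rw [altNodes_of_odd N α hj, sub_mul, sub_sub_cancel_left, abs_neg, abs_of_nonneg hαh]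

theorem altNodes_le_grid (N : ℕ) {α : ℝ} (hα0 : 0 ≤ α) (hα : α ≤ 1) {j k : ℕ}
    (hjk : j < k ∨ j = k ∧ Odd k) : altNodes N α j ≤ k * gridStep N := by
  have hh := gridStep_pos N
  rcases hjk with hjk | ⟨rfl, hj⟩
  · have hjk' : (j : ℝ) + α ≤ k := by
      have : (j : ℝ) + 1 ≤ k := by exact_mod_cast hjk
      linarith
    have := mul_le_mul_of_nonneg_right hjk' hh.le
    linarith [(abs_le.mp (abs_altNodes_sub_le N hα0 j)).2]
  · rw [altNodes_of_odd N α hj]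
    exact mul_le_mul_of_nonneg_right (by linarith) hh.le

theorem grid_le_altNodes (N : ℕ) {α : ℝ} (hα0 : 0 ≤ α) (hα : α ≤ 1) {j k : ℕ}
    (hkj : k < j ∨ k = j ∧ Even j) : k * gridStep N ≤ altNodes N α j := by
  have hh := gridStep_pos N
  rcases hkj with hkj | ⟨rfl, hk⟩
  · have hkj' : (k : ℝ) ≤ j - α := by
      have : (k : ℝ) + 1 ≤ j := by exact_mod_cast hkj
      linarith
    have := mul_le_mul_of_nonneg_right hkj' hh.le
    linarith [(abs_le.mp (abs_altNodes_sub_le N hα0 j)).1]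
  · rcases eq_or_ne k 0 with rfl | hk0
    · simp [altNodes]
    rw [altNodes_of_even N α hk hk0]
    exact mul_le_mul_of_nonneg_right (by linarith) hh.le

theorem altNodes_nonneg (N : ℕ) {α : ℝ} (hα0 : 0 ≤ α) (hα : α ≤ 1) (j : ℕ) :
    0 ≤ altNodes N α j := by
  simpa using grid_le_altNodes N hα0 hα (j := j) (k := 0)
    (j.eq_zero_or_pos.symm.imp_right fun h => by simp [h])

theorem altNodes_le_pi {N : ℕ} {α : ℝ} (hα0 : 0 ≤ α) (hα : α ≤ 1 / 2) {j : ℕ} (hj : j ≤ N) :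
    altNodes N α j ≤ π := by
  have hj' : (j : ℝ) ≤ N := by exact_mod_cast hj
  have := mul_gridStep_le_pi (N := N) (t := j + α) (by linarith)
  linarith [(abs_le.mp (abs_altNodes_sub_le N hα0 j)).2]

theorem cos_altNodes_lt_one {N : ℕ} {α : ℝ} (hα0 : 0 ≤ α) (hα : α ≤ 1 / 2) {j : ℕ}
    (hj : j ∈ range N) : cos (altNodes N α (j + 1 : ℕ)) < 1 := by
  rw [← cos_zero]
  refine cos_lt_cos_of_nonneg_of_le_pi le_rfl (altNodes_le_pi hα0 hα (Finset.mem_range.mp hj)) ?_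
  have hpos : 0 < (j + 1 - α) * gridStep N :=
    mul_pos (by linarith [j.cast_nonneg (α := ℝ)]) (gridStep_pos N)
  have := (abs_le.mp (abs_altNodes_sub_le N hα0 (j + 1))).1
  push_cast at this ⊢
  linarith

theorem centralLagrange_altNodes_nonpos {N : ℕ} {α : ℝ} (hα0 : 0 ≤ α) (hα : α ≤ 1 / 2) {k : ℕ}
    (hk0 : k ≠ 0) (hkN : k ≤ N) :
    centralLagrange (altNodes N α) N (k * gridStep N) ≤ 0 := by
  obtain ⟨M, hM, hMN, hMk⟩ : ∃ M, Odd M ∧ M ≤ N ∧ (k = M ∨ k = M + 1) := by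
    rcases k.even_or_odd with hk | hk
    · exact ⟨k - 1, Nat.Even.sub_odd (by omega) hk odd_one, by omega, by omega⟩
    · exact ⟨k, hk, hkN, Or.inl rfl⟩
  have hkπ : k * gridStep N ≤ π := natCast_mul_gridStep_le_pi hkN
  rw [centralLagrange, Finset.prod_div_distrib, ← Finset.prod_range_mul_prod_Ico _ hMN]
  refine div_nonpos_of_nonpos_of_nonneg (mul_nonpos_of_nonpos_of_nonneg ?_ ?_)
    (Finset.prod_nonneg fun j hj => (sub_pos.mpr (cos_altNodes_lt_one hα0 hα hj)).le)
  · refine prod_nonpos_of_odd_card (by rwa [Finset.card_range]) fun j hj => sub_nonpos.mpr ?_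
    rw [Finset.mem_range] at hj
    refine cos_le_cos_of_nonneg_of_le_pi (altNodes_nonneg N hα0 (by linarith) _) hkπ
      (altNodes_le_grid N hα0 (by linarith) ?_)
    grind
  · refine Finset.prod_nonneg fun j hj => sub_nonneg.mpr ?_
    rw [Finset.mem_Ico] at hj
    refine cos_le_cos_of_nonneg_of_le_pi (mul_nonneg k.cast_nonneg (gridStep_pos N).le)
      (altNodes_le_pi hα0 hα hj.2) (grid_le_altNodes N hα0 (by linarith) ?_)
    grind

theorem prod_one_sub_cos_altNodes_le (N : ℕ) {α : ℝ} (hα0 : 0 ≤ α) (hα : α ≤ 1 / 2) :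
    ∏ j ∈ range N, (1 - cos (altNodes N α (j + 1 : ℕ))) ≤
      ∏ j ∈ range N, (1 - cos ((j + 1 : ℕ) * gridStep N)) := by
  have hh := gridStep_pos N
  have hαh : 0 ≤ α * gridStep N := mul_nonneg hα0 hh.le
  have hαh' : α * gridStep N ≤ gridStep N / 2 := by
    linarith [mul_le_mul_of_nonneg_right hα hh.le]
  refine prod_range_le_prod_range_of_pairs (fun j => sub_nonneg.mpr (cos_le_one _))
    (fun m hm => ?_) fun m hm => ?_
  · have hmN : 2 * (m : ℝ) + 2 ≤ N := by exact_mod_cast hm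
    have hmh : 0 ≤ m * gridStep N := mul_nonneg m.cast_nonneg hh.le
    have hπ : (2 * m + 2 + 1 / 2) * gridStep N ≤ π := mul_gridStep_le_pi (by linarith)
    rw [altNodes_of_odd N α ⟨m, rfl⟩, altNodes_of_even N α ⟨m + 1, by ring⟩ (by omega)]
    push_cast
    have := abs_cos_sub_mul_abs_cos_sub_le_of_inward (c := 0) (u := (2 * m + 1 - α) * gridStep N)
      (v := (2 * m + 1 + 1 + α) * gridStep N) hαh (by linarith) (by linarith) (by linarith)
      le_rfl pi_pos.le (Or.inl (by linarith))
    simpa only [cos_zero, abs_of_nonneg (sub_nonneg.mpr (cos_le_one _)), ← add_mul, ← sub_mul,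
      sub_add_cancel, add_sub_cancel_right] using this
  · exact sub_le_sub_left (cos_le_cos_of_nonneg_of_le_pi
      (altNodes_nonneg N hα0 (by linarith) _) (natCast_mul_gridStep_le_pi hm.ge)
      (altNodes_le_grid N hα0 (by linarith) (Or.inr ⟨rfl, m, rfl⟩))) 1

theorem abs_cos_grid_sub_pair_le {N : ℕ} {α : ℝ} (hα0 : 0 ≤ α) (hα : α ≤ 1 / 2) {k m : ℕ}
    (hk0 : k ≠ 0) (hkN : k ≤ N) (hmN : 2 * m + 1 ≤ N) (hkm : k < 2 * m ∨ 2 * m + 1 < k) :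
    |cos (k * gridStep N) - cos ((2 * m : ℕ) * gridStep N)| *
        |cos (k * gridStep N) - cos ((2 * m + 1 : ℕ) * gridStep N)| ≤
      |cos (k * gridStep N) - cos (altNodes N α (2 * m : ℕ))| *
        |cos (k * gridStep N) - cos (altNodes N α (2 * m + 1 : ℕ))| := by
  have hh := gridStep_pos N
  have hαh : 0 ≤ α * gridStep N := mul_nonneg hα0 hh.le
  have hαh' : α * gridStep N ≤ gridStep N / 2 := by
    linarith [mul_le_mul_of_nonneg_right hα hh.le]
  have hkπ : k * gridStep N ≤ π := natCast_mul_gridStep_le_pi hkN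
  have hmπ : (2 * m + 1 : ℕ) * gridStep N ≤ π := natCast_mul_gridStep_le_pi hmN
  rcases eq_or_ne m 0 with rfl | hm0
  · have h1k : (1 : ℕ) * gridStep N ≤ k * gridStep N :=
      mul_le_mul_of_nonneg_right (by exact_mod_cast Nat.one_le_iff_ne_zero.mpr hk0) hh.le
    simp only [altNodes, mul_zero, zero_add, Nat.cast_zero, zero_mul, if_true]
    refine mul_le_mul_of_nonneg_left ?_ (abs_nonneg _)
    rw [abs_sub_comm, abs_sub_comm (cos (k * gridStep N))]
    exact abs_cos_sub_cos_le_of_Icc_subset (altNodes_nonneg N hα0 (by linarith) 1)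
      (altNodes_le_grid N hα0 (by linarith) (by simp)) h1k le_rfl hkπ
  · have hside : k * gridStep N ≤ (2 * m : ℕ) * gridStep N ∨
        (2 * m + 1 : ℕ) * gridStep N ≤ k * gridStep N := by
      refine hkm.imp (fun h => ?_) fun h => ?_ <;>
        exact mul_le_mul_of_nonneg_right (by exact_mod_cast h.le) hh.le
    rw [altNodes_of_even N α (even_two_mul m) (by omega), altNodes_of_odd N α ⟨m, rfl⟩, add_mul,
      sub_mul]
    refine abs_cos_sub_mul_abs_cos_sub_le_of_inward hαh ?_ (by positivity) hmπ (by positivity) hkπ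
      hside
    push_cast
    linarith

theorem abs_cos_grid_sub_center_pair_le {N : ℕ} {α : ℝ} (hα0 : 0 ≤ α) (hα : α ≤ 1 / 2) {p : ℕ}
    (hp : 4 * p < N) :
    |cos ((2 * p : ℕ) * gridStep N) - cos ((2 * p + 1 : ℕ) * gridStep N)| ≤
      4 * |cos ((2 * p : ℕ) * gridStep N) - cos (altNodes N α (2 * p + 1 : ℕ))| := by
  have hh := gridStep_pos N
  have hαh : 0 ≤ α * gridStep N := mul_nonneg hα0 hh.le
  have hαh' : α * gridStep N ≤ gridStep N / 2 := by
    linarith [mul_le_mul_of_nonneg_right hα hh.le]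
  have hpπ : (4 * p + 1 : ℕ) * gridStep N ≤ π := natCast_mul_gridStep_le_pi hp
  rw [altNodes_of_odd N α ⟨p, rfl⟩]
  push_cast at hpπ ⊢
  apply abs_cos_sub_cos_le_four_mul <;> linarith [mul_nonneg p.cast_nonneg hh.le]

/-- The factor that vanishes on the grid is traded for its perturbed value; its partner, the node
`x (2 p + 1)`, moves towards the grid point `2 p h`, which costs the factor `4`. -/
theorem mul_prod_erase_abs_cos_grid_sub_le {N : ℕ} {α : ℝ} (hα0 : 0 ≤ α) (hα : α ≤ 1 / 2)
    {p : ℕ} (hp0 : p ≠ 0) (hp : 4 * p < N) :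
    |cos ((2 * p : ℕ) * gridStep N) - cos (altNodes N α (2 * p : ℕ))| / 4 *
        ∏ j ∈ (range (N + 1)).erase (2 * p),
          |cos ((2 * p : ℕ) * gridStep N) - cos (j * gridStep N)| ≤
      ∏ j ∈ range (N + 1), |cos ((2 * p : ℕ) * gridStep N) - cos (altNodes N α j)| := by
  have hh := gridStep_pos N
  set c := cos ((2 * p : ℕ) * gridStep N)
  rw [Finset.erase_eq, ← Finset.prod_update_of_mem (Finset.mem_range.mpr (by omega))
    (fun j : ℕ => |c - cos (j * gridStep N)|)]
  refine prod_range_le_prod_range_of_pairs (fun j => ?_) (fun m hm => ?_) fun m hm => ?_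
  · rcases eq_or_ne j (2 * p) with rfl | hj
    · rw [Function.update_self]
      positivity
    · rw [Function.update_of_ne hj]
      positivity
  · rw [Function.update_of_ne (a := 2 * m + 1) (by omega)]
    rcases eq_or_ne m p with rfl | hmp
    · rw [Function.update_self, div_mul_eq_mul_div, mul_div_assoc]
      have := abs_cos_grid_sub_center_pair_le hα0 hα hp
      refine mul_le_mul_of_nonneg_left ?_ (abs_nonneg _)
      linarith
    · rw [Function.update_of_ne (by omega)]
      exact abs_cos_grid_sub_pair_le hα0 hα (by omega) (by omega) (by omega) (by omega)
  · rw [Function.update_of_ne (by omega)]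
    exact abs_cos_sub_cos_le_of_Icc_subset (by positivity) le_rfl
      (mul_le_mul_of_nonneg_right (by exact_mod_cast (by omega : 2 * p ≤ 2 * m)) hh.le)
      (grid_le_altNodes N hα0 (by linarith) (Or.inr ⟨rfl, even_two_mul m⟩))
      (altNodes_le_pi hα0 hα (by omega))

theorem two_mul_sin_mul_le_abs_cos_grid_sub {N : ℕ} {α : ℝ} (hα0 : 0 ≤ α) (hα : α ≤ 1 / 2)
    {p : ℕ} (hp0 : p ≠ 0) (hp : 4 * p < N) :
    2 * (sin ((2 * p : ℕ) * gridStep N) * (α * gridStep N / π)) ≤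
      |cos ((2 * p : ℕ) * gridStep N) - cos (altNodes N α (2 * p : ℕ))| := by
  have hh := gridStep_pos N
  have hαh : 0 ≤ α * gridStep N := mul_nonneg hα0 hh.le
  have hαh' : α * gridStep N ≤ gridStep N / 2 := by
    linarith [mul_le_mul_of_nonneg_right hα hh.le]
  have hpπ : (4 * p + 1 : ℕ) * gridStep N ≤ π := natCast_mul_gridStep_le_pi hp
  have hθ : 0 ≤ (2 * p : ℕ) * gridStep N := by positivity
  push_cast at hpπ hθ
  rw [altNodes_of_even N α (even_two_mul p) (by omega), cos_sub_cos_eq_two_mul_sin_mul_sin]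
  push_cast
  have hsin : sin (2 * p * gridStep N) ≤
      sin (((2 * p + α) * gridStep N + 2 * p * gridStep N) / 2) :=
    sin_le_sin_of_le_of_le_pi_div_two (by linarith) (by linarith) (by linarith)
  have hjordan : α * gridStep N / π ≤
      sin (((2 * p + α) * gridStep N - 2 * p * gridStep N) / 2) := by
    convert mul_le_sin (x := α * gridStep N / 2) (by linarith) (by linarith) using 1
    · ring
    · ring_nf
  refine le_trans ?_ (le_abs_self _)
  have := sin_nonneg_of_nonneg_of_le_pi hθ (by linarith)
  gcongr
  exact this.trans hsin

theorem prod_erase_abs_cos_grid_sub_mul_abs_sin {N k : ℕ} (hk : k ∈ range (N + 1)) :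
    (∏ j ∈ (range (N + 1)).erase k, |cos (k * gridStep N) - cos (j * gridStep N)|) *
        |sin (k * gridStep N)| =
      |sin (k * gridStep N / 2)| * ∏ j ∈ range N, (1 - cos ((j + 1 : ℕ) * gridStep N)) := by
  have hU : 0 ≤ ∏ j ∈ range N, (1 - cos ((j + 1 : ℕ) * gridStep N)) :=
    Finset.prod_nonneg fun j _ => sub_nonneg.mpr (cos_le_one _)
  rw [← Finset.abs_prod, ← abs_mul, prod_erase_cos_grid_sub_mul_sin hk, abs_mul, abs_mul,
    abs_neg_one_pow, one_mul, abs_of_nonneg hU]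

theorem prod_range_succ_abs_cos_sub_cos_altNodes (N : ℕ) (α θ : ℝ) :
    ∏ j ∈ range (N + 1), |cos θ - cos (altNodes N α j)| =
      (∏ j ∈ range N, |cos θ - cos (altNodes N α (j + 1 : ℕ))|) * (2 * sin (θ / 2) ^ 2) := by
  have hzero : |cos θ - cos (altNodes N α (0 : ℕ))| = 2 * sin (θ / 2) ^ 2 := by
    rw [altNodes, if_pos Nat.cast_zero, cos_zero, abs_sub_comm,
      abs_of_nonneg (sub_nonneg.mpr (cos_le_one θ)), sin_sq_eq_half_sub,
      mul_div_cancel₀ _ two_ne_zero]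
    ring
  rw [Finset.prod_range_succ', hzero]

theorem mul_prod_one_sub_cos_grid_le_mul_sin {N : ℕ} {α : ℝ} (hα0 : 0 ≤ α) (hα : α ≤ 1 / 2)
    {p : ℕ} (hp0 : p ≠ 0) (hp : 4 * p < N) :
    α * gridStep N / (2 * π) * ∏ j ∈ range N, (1 - cos ((j + 1 : ℕ) * gridStep N)) ≤
      (∏ j ∈ range N, |cos ((2 * p : ℕ) * gridStep N) - cos (altNodes N α (j + 1 : ℕ))|) *
        (2 * sin ((2 * p : ℕ) * gridStep N / 2)) := by
  have hθ0 : 0 < (2 * p : ℕ) * gridStep N :=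
    mul_pos (by exact_mod_cast (by omega : 0 < 2 * p)) (gridStep_pos N)
  have hθπ : (2 * p : ℕ) * gridStep N ≤ π := natCast_mul_gridStep_le_pi (by omega)
  have hnodes := mul_prod_erase_abs_cos_grid_sub_le hα0 hα hp0 hp
  have hcenter := two_mul_sin_mul_le_abs_cos_grid_sub hα0 hα hp0 hp
  have herase := prod_erase_abs_cos_grid_sub_mul_abs_sin (N := N) (k := 2 * p)
    (Finset.mem_range.mpr (by omega))
  have hE : 0 ≤ ∏ j ∈ (range (N + 1)).erase (2 * p),
      |cos ((2 * p : ℕ) * gridStep N) - cos (j * gridStep N)| :=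
    Finset.prod_nonneg fun j _ => abs_nonneg _
  rw [prod_range_succ_abs_cos_sub_cos_altNodes] at hnodes
  generalize (2 * p : ℕ) * gridStep N = θ at *
  have hs : 0 < sin (θ / 2) := sin_pos_of_pos_of_lt_pi (by linarith) (by linarith)
  rw [abs_of_pos hs, abs_of_nonneg (sin_nonneg_of_nonneg_of_le_pi hθ0.le hθπ)] at herase
  refine le_of_mul_le_mul_left ?_ hs
  linear_combination hnodes - α * gridStep N / (2 * π) * herase +
    mul_le_mul_of_nonneg_right hcenter hE / 4

theorem mul_prod_one_sub_cos_grid_le {N : ℕ} {α : ℝ} (hα0 : 0 ≤ α) (hα : α ≤ 1 / 2)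
    {p : ℕ} (hp0 : p ≠ 0) (hp : 4 * p < N) :
    α / (4 * π) * (1 / p) * ∏ j ∈ range N, (1 - cos ((j + 1 : ℕ) * gridStep N)) ≤
      ∏ j ∈ range N, |cos ((2 * p : ℕ) * gridStep N) - cos (altNodes N α (j + 1 : ℕ))| := by
  have hph : 0 < p * gridStep N :=
    mul_pos (by exact_mod_cast Nat.pos_of_ne_zero hp0) (gridStep_pos N)
  have hsin : sin ((2 * p : ℕ) * gridStep N / 2) ≤ p * gridStep N := by
    convert sin_le hph.le using 2
    push_cast
    ring
  have hA : 0 ≤ ∏ j ∈ range N,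
      |cos ((2 * p : ℕ) * gridStep N) - cos (altNodes N α (j + 1 : ℕ))| :=
    Finset.prod_nonneg fun j _ => abs_nonneg _
  have hcoeff : α / (4 * π) * (1 / p) * (2 * (p * gridStep N)) = α * gridStep N / (2 * π) := by
    have hp' : (p : ℝ) ≠ 0 := Nat.cast_ne_zero.mpr hp0
    field_simp
    norm_num
  refine le_of_mul_le_mul_right ?_ (mul_pos two_pos hph)
  calc _ = α * gridStep N / (2 * π) * ∏ j ∈ range N, (1 - cos ((j + 1 : ℕ) * gridStep N)) := by
        rw [mul_right_comm, hcoeff]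
    _ ≤ _ := mul_prod_one_sub_cos_grid_le_mul_sin hα0 hα hp0 hp
    _ ≤ _ := mul_le_mul_of_nonneg_left (mul_le_mul_of_nonneg_left hsin zero_le_two) hA

theorem centralLagrange_altNodes_le {N : ℕ} {α : ℝ} (hα0 : 0 ≤ α) (hα : α ≤ 1 / 2)
    {p : ℕ} (hp0 : p ≠ 0) (hp : 4 * p < N) :
    centralLagrange (altNodes N α) N ((2 * p : ℕ) * gridStep N) ≤ -(α / (4 * π) * (1 / p)) := by
  have hpos : ∀ j ∈ range N, 0 < 1 - cos (altNodes N α (j + 1 : ℕ)) := fun j hj =>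
    sub_pos.mpr (cos_altNodes_lt_one hα0 hα hj)
  have habs : |centralLagrange (altNodes N α) N ((2 * p : ℕ) * gridStep N)| =
      (∏ j ∈ range N, |cos ((2 * p : ℕ) * gridStep N) - cos (altNodes N α (j + 1 : ℕ))|) /
        ∏ j ∈ range N, (1 - cos (altNodes N α (j + 1 : ℕ))) := by
    rw [centralLagrange, Finset.prod_div_distrib, abs_div, Finset.abs_prod,
      abs_of_pos (Finset.prod_pos hpos)]
  rw [abs_of_nonpos (centralLagrange_altNodes_nonpos hα0 hα (by omega) (by omega))] at habs
  rw [le_neg, habs, le_div_iff₀ (Finset.prod_pos hpos)]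
  exact (mul_le_mul_of_nonneg_left (prod_one_sub_cos_altNodes_le N hα0 hα) (by positivity)).trans
    (mul_prod_one_sub_cos_grid_le hα0 hα hp0 hp)

theorem sum_centralLagrange_altNodes_le {N K : ℕ} {α : ℝ} (hα0 : 0 ≤ α) (hα : α ≤ 1 / 2)
    (hK : 4 * K < N) :
    ∑ j ∈ range N, centralLagrange (altNodes N α) N ((j + 1 : ℕ) * gridStep N) ≤
      -(α / (4 * π) * ∑ m ∈ range K, 1 / ((m : ℝ) + 1)) := by
  have hsub : (range K).image (fun m => 2 * m + 1) ⊆ range N := by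
    simp only [Finset.image_subset_iff, Finset.mem_range]
    omega
  have hle := Finset.sum_le_sum_of_subset_of_nonneg hsub fun j hj _ => neg_nonneg.mpr
    (centralLagrange_altNodes_nonpos hα0 hα j.succ_ne_zero (Finset.mem_range.mp hj))
  rw [Finset.sum_neg_distrib, Finset.sum_neg_distrib, neg_le_neg_iff,
    Finset.sum_image fun a _ b _ hab => by simpa using hab] at hle
  rw [Finset.mul_sum, ← Finset.sum_neg_distrib]
  refine hle.trans (Finset.sum_le_sum fun m hm => ?_)
  rw [Finset.mem_range] at hm
  exact_mod_cast centralLagrange_altNodes_le hα0 hα m.succ_ne_zero (by omega)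

theorem central_weight_negative_general (α : ℝ) (hα0 : 0 < α) (hα : α < 1 / 2) :
    ∃ N₀ : ℕ, ∀ N : ℕ, N₀ ≤ N →
      ∀ w : ℤ → ℝ, ExactQuad N (altNodes N α) w → w 0 < 0 := by
  obtain ⟨K, hK⟩ := (tendsto_sum_range_one_div_nat_succ_atTop.eventually_gt_atTop
    (2 * π / α)).exists
  refine ⟨4 * K + 1, fun N hN w hw => ?_⟩
  rw [hw.apply_zero_eq (altNodes_neg N α) fun j hj => cos_altNodes_lt_one hα0.le hα.le hj]
  have hsum := sum_centralLagrange_altNodes_le hα0.le hα.le hN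
  have hlarge : 1 / 2 < α / (4 * π) * ∑ m ∈ range K, 1 / ((m : ℝ) + 1) :=
    calc 1 / 2 = α / (4 * π) * (2 * π / α) := by field_simp; norm_num
      _ < _ := mul_lt_mul_of_pos_left hK (by positivity)
  exact mul_neg_of_pos_of_neg (gridStep_pos N) (by linarith)

/-- for any α > 0, the central quadrature weight for the alternating maximally
perturbed nodes is negative for all sufficiently large even N. -/
theorem central_weight_negative (α : ℝ) (hα0 : 0 < α) (hα : α < 1/2) :
    ∃ N₀ : ℕ, ∀ N : ℕ, Even N → N₀ ≤ N →
      ∀ w : ℤ → ℝ, ExactQuad N (altNodes N α) w → w 0 < 0 := by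
  obtain ⟨N₀, hN₀⟩ := central_weight_negative_general α hα0 hα
  exact ⟨N₀, fun N _ => hN₀ N⟩
end
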